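/- At the left endpoint x = a the series ∑_{n=0}^∞ c_n y_n(a) converges, and its sum f̄(a) equals f(a) if sin α ≠ 0, while f̄(a) = 0 if sin α = 0 (the Dirichlet case y(a) = 0). -/

import Mathlib

/-- `(lam, y)` is an eigenpair of the Sturm–Liouville problem
`-y'' + q y = lam y` on `[a,b]` with separated boundary conditions
`y(a) cos α + y'(a) sin α = 0`, `y(b) cos β + y'(b) sin β = 0`. -/
def IsSLEigenpair (a b : ℝ) (q : ℝ → ℝ) (α β : ℝ) (lam : ℝ) (y : ℝ → ℝ) : Prop :=
  ∃ y' y'' : ℝ → ℝ,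
    (∀ x ∈ Set.Icc a b, HasDerivWithinAt y (y' x) (Set.Icc a b) x) ∧
    (∀ x ∈ Set.Icc a b, HasDerivWithinAt y' (y'' x) (Set.Icc a b) x) ∧
    ContinuousOn y'' (Set.Icc a b) ∧
    (∃ x ∈ Set.Icc a b, y x ≠ 0) ∧
    (∀ x ∈ Set.Icc a b, -(y'' x) + q x * y x = lam * y x) ∧
    y a * Real.cos α + y' a * Real.sin α = 0 ∧
    y b * Real.cos β + y' b * Real.sin β = 0

/-!
If `sin α = 0`, every eigenfunction vanishes at `a`. Otherwise the condition at `a` has the Robin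
form `y'(a) = h y(a)` with `h = -cos α / sin α`. In that case put
`Φ_N(T) = ∑_{n < N} y_n(a) ∫_a^T y_n`, so that the partial sums of the series at `a` are the
integrals of `f` against `dΦ_N`. Two facts suffice for them to tend to `f(a+)`: the `Φ_N` are
uniformly bounded on `[a, b]`, and `Φ_N(T) → 1` for `a < T < b`. Indeed `f` is a difference of
monotone functions, and for these integration by parts against the Stieltjes measure and dominated
convergence apply.

*Boundedness.* Writing `λ_n = s_n²`, the eigenfunction is `y_n(a) cos (s_n (x - a)) + O(1 / s_n)`
and `s_n = π (n + d) / (b - a) + O(1 / n)`. The frequencies are located by the sign changes of the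
characteristic function, and by comparison of integrals no two eigenvalues share a sign change.
Up to a uniformly convergent series, `Φ_N` is therefore a partial sum of
`∑ sin ((n + d) θ) / (n + d)`, and those are bounded and converge uniformly away from the multiples
of the period.

*Limit.* The eigenfunctions are complete in `L²`, by the spectral theorem for the compact operator
whose kernel is Green's function. Parseval's identity for the indicators of `[a, x]` and
`[a, t]`, where `x < t`, says that `∑ y_n(·) ∫_a^t y_n` integrates to `x - a` over `[a, x]`; this
series converges uniformly near `a`, so that the identity may be differentiated at `x = a`.
-/

namespace SturmLiouville

open Set Filter Topology MeasureTheory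

/-! ### Calculus on a compact interval -/

section Calculus

variable {E : Type*} [NormedAddCommGroup E] [NormedSpace ℝ E] {a b : ℝ}

theorem hasDerivWithinAt_Ici_of_Icc {f : ℝ → E} {f' : E} {x : ℝ}
    (h : HasDerivWithinAt f f' (Icc a b) x) (hx : x ∈ Ico a b) :
    HasDerivWithinAt f f' (Ici x) x :=
  h.mono_of_mem_nhdsWithin (Icc_mem_nhdsGE_of_mem hx)

theorem intervalIntegrable_of_continuousOn_Icc {F : Type*} [NormedAddCommGroup F] {g : ℝ → F}
    (hg : ContinuousOn g (Icc a b)) {x y : ℝ} (hx : x ∈ Icc a b) (hy : y ∈ Icc a b) :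
    IntervalIntegrable g volume x y :=
  (hg.mono (uIcc_subset_Icc hx hy)).intervalIntegrable

theorem hasDerivWithinAt_integral_Icc [CompleteSpace E] {g : ℝ → E}
    (hg : ContinuousOn g (Icc a b)) {c x : ℝ} (hc : c ∈ Icc a b) (hx : x ∈ Icc a b) :
    HasDerivWithinAt (fun y => ∫ t in c..y, g t) (g x) (Icc a b) x :=
  haveI : Fact (x ∈ Icc a b) := ⟨hx⟩
  intervalIntegral.integral_hasDerivWithinAt_right
    (intervalIntegrable_of_continuousOn_Icc hg hc hx)
    (hg.stronglyMeasurableAtFilter_nhdsWithin measurableSet_Icc x) (hg x hx)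

theorem continuousOn_integral_Icc [CompleteSpace E] {g : ℝ → E}
    (hg : ContinuousOn g (Icc a b)) {c : ℝ} (hc : c ∈ Icc a b) :
    ContinuousOn (fun y => ∫ t in c..y, g t) (Icc a b) :=
  fun _ hx => (hasDerivWithinAt_integral_Icc hg hc hx).continuousWithinAt

theorem integral_eq_sub_of_hasDerivWithinAt_Icc [CompleteSpace E] {G g : ℝ → E}
    (hg : ContinuousOn g (Icc a b))
    (hG : ∀ x ∈ Icc a b, HasDerivWithinAt G (g x) (Icc a b) x) {x y : ℝ}
    (hx : x ∈ Icc a b) (hy : y ∈ Icc a b) : ∫ t in x..y, g t = G y - G x := by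
  have hsub : uIcc x y ⊆ Icc a b := uIcc_subset_Icc hx hy
  refine intervalIntegral.integral_eq_sub_of_hasDeriv_right
    (fun t ht => (hG t (hsub ht)).continuousWithinAt.mono hsub) (fun t ht => ?_)
    (intervalIntegrable_of_continuousOn_Icc hg hx hy)
  have htI : t ∈ Icc a b := hsub (Ioo_subset_Icc_self ht)
  exact (hasDerivWithinAt_Ici_of_Icc (hG t htI)
    ⟨htI.1, ht.2.trans_le (max_le hx.2 hy.2)⟩).mono Ioi_subset_Ici_self

theorem norm_sub_le_of_hasDerivWithinAt_Icc {F F' : ℝ → E} {C : ℝ}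
    (hF : ∀ x ∈ Icc a b, HasDerivWithinAt F (F' x) (Icc a b) x)
    (hC : ∀ x ∈ Icc a b, ‖F' x‖ ≤ C) {x : ℝ} (hx : x ∈ Icc a b) :
    ‖F x - F a‖ ≤ C * (b - a) := by
  have ha : a ∈ Icc a b := left_mem_Icc.2 (hx.1.trans hx.2)
  have hC0 : 0 ≤ C := (norm_nonneg _).trans (hC a ha)
  calc ‖F x - F a‖ ≤ C * ‖x - a‖ :=
        (convex_Icc a b).norm_image_sub_le_of_norm_hasDerivWithin_le hF hC ha hx
    _ ≤ C * (b - a) := by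
        rw [Real.norm_of_nonneg (sub_nonneg.2 hx.1)]
        gcongr
        exact hx.2

theorem norm_le_gronwallBound_of_hasDerivWithinAt_Icc {F F' : ℝ → E} {K ε : ℝ}
    (hF : ∀ x ∈ Icc a b, HasDerivWithinAt F (F' x) (Icc a b) x)
    (hK : ∀ x ∈ Icc a b, ‖F' x‖ ≤ K * ‖F x‖ + ε) {x : ℝ} (hx : x ∈ Icc a b) :
    ‖F x‖ ≤ gronwallBound ‖F a‖ K ε (x - a) :=
  norm_le_gronwallBound_of_norm_deriv_right_le (fun x hx => (hF x hx).continuousWithinAt)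
    (fun x hx => hasDerivWithinAt_Ici_of_Icc (hF x (Ico_subset_Icc_self hx)) hx) le_rfl
    (fun x hx => hK x (Ico_subset_Icc_self hx)) x hx

end Calculus

/-! ### Linear second order equations -/

section Equation

variable {a b : ℝ} {P Q z z' w w' : ℝ → ℝ}

/-- The pair `(z, z')` consists of a classical solution of `z'' = Q z` on `[a, b]` and its
derivative, one-sided at the endpoints. -/
structure IsSolution (a b : ℝ) (Q z z' : ℝ → ℝ) : Prop where
  hasDerivWithinAt : ∀ x ∈ Icc a b, HasDerivWithinAt z (z' x) (Icc a b) x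
  hasDerivWithinAt_deriv : ∀ x ∈ Icc a b, HasDerivWithinAt z' (Q x * z x) (Icc a b) x

/-- The Wronskian `z w' - z' w` of two functions given together with their derivatives. -/
def wronskian (z z' w w' : ℝ → ℝ) (x : ℝ) : ℝ := z x * w' x - z' x * w x

namespace IsSolution

theorem continuousOn (hz : IsSolution a b Q z z') : ContinuousOn z (Icc a b) :=
  fun x hx => (hz.hasDerivWithinAt x hx).continuousWithinAt

theorem linearCombination (hz : IsSolution a b Q z z') (hw : IsSolution a b Q w w') (A B : ℝ) :
    IsSolution a b Q (fun x => A * z x + B * w x) (fun x => A * z' x + B * w' x) where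
  hasDerivWithinAt x hx :=
    ((hz.hasDerivWithinAt x hx).const_mul A).add ((hw.hasDerivWithinAt x hx).const_mul B)
  hasDerivWithinAt_deriv x hx :=
    (((hz.hasDerivWithinAt_deriv x hx).const_mul A).add
      ((hw.hasDerivWithinAt_deriv x hx).const_mul B)).congr_deriv (by ring)

theorem hasDerivWithinAt_wronskian (hz : IsSolution a b Q z z') {φ φ' : ℝ → ℝ} {x d : ℝ}
    (hx : x ∈ Icc a b) (hφ : HasDerivWithinAt φ (φ' x) (Icc a b) x)
    (hφ' : HasDerivWithinAt φ' d (Icc a b) x) :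
    HasDerivWithinAt (wronskian z z' φ φ') (z x * (d - Q x * φ x)) (Icc a b) x :=
  (((hz.hasDerivWithinAt x hx).mul hφ').sub
    ((hz.hasDerivWithinAt_deriv x hx).mul hφ)).congr_deriv (by ring)

theorem wronskian_eq (hz : IsSolution a b Q z z') (hw : IsSolution a b Q w w') {x : ℝ}
    (hx : x ∈ Icc a b) : wronskian z z' w w' x = wronskian z z' w w' a := by
  have hd : ∀ x ∈ Icc a b, HasDerivWithinAt (wronskian z z' w w') 0 (Icc a b) x := fun x hx =>
    (hz.hasDerivWithinAt_wronskian hx (hw.hasDerivWithinAt x hx)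
      (hw.hasDerivWithinAt_deriv x hx)).congr_deriv (by ring)
  exact constant_of_has_deriv_right_zero (fun x hx => (hd x hx).continuousWithinAt)
    (fun x hx => hasDerivWithinAt_Ici_of_Icc (hd x (Ico_subset_Icc_self hx)) hx) x hx

theorem integral_mul_eq_wronskian_sub (hz : IsSolution a b P z z') (hw : IsSolution a b Q w w')
    (hab : a ≤ b) (hP : ContinuousOn P (Icc a b)) (hQ : ContinuousOn Q (Icc a b)) :
    ∫ x in a..b, z x * ((Q x - P x) * w x) = wronskian z z' w w' b - wronskian z z' w w' a :=
  integral_eq_sub_of_hasDerivWithinAt_Icc (g := fun x => z x * ((Q x - P x) * w x))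
    (hz.continuousOn.mul ((hQ.sub hP).mul hw.continuousOn))
    (fun x hx => (hz.hasDerivWithinAt_wronskian hx (hw.hasDerivWithinAt x hx)
      (hw.hasDerivWithinAt_deriv x hx)).congr_deriv (by ring))
    (left_mem_Icc.2 hab) (right_mem_Icc.2 hab)

end IsSolution

theorem norm_mk_snd_mul_fst_le {K t : ℝ} (hK : 1 ≤ K) (ht : |t| ≤ K) (p : ℝ × ℝ) :
    ‖((p.2, t * p.1) : ℝ × ℝ)‖ ≤ K * ‖p‖ := by
  refine max_le ((norm_snd_le p).trans (le_mul_of_one_le_left (norm_nonneg p) hK)) ?_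
  rw [norm_mul, Real.norm_eq_abs]
  exact mul_le_mul ht (norm_fst_le p) (norm_nonneg _) (zero_le_one.trans hK)

theorem exists_one_le_abs_le_of_continuousOn_Icc (hQ : ContinuousOn Q (Icc a b)) :
    ∃ K, 1 ≤ K ∧ ∀ x ∈ Icc a b, |Q x| ≤ K := by
  obtain ⟨B, hB⟩ := isCompact_Icc.exists_bound_of_continuousOn hQ
  exact ⟨max 1 B, le_max_left _ _, fun x hx => (hB x hx).trans (le_max_right _ _)⟩

theorem IsSolution.mk_eq_zero (hz : IsSolution a b Q z z') (hQ : ContinuousOn Q (Icc a b))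
    (h0 : z a = 0) (h1 : z' a = 0) {x : ℝ} (hx : x ∈ Icc a b) : (z x, z' x) = 0 := by
  obtain ⟨K, hK, hQK⟩ := exists_one_le_abs_le_of_continuousOn_Icc hQ
  have h := norm_le_gronwallBound_of_hasDerivWithinAt_Icc (F := fun x => (z x, z' x)) (ε := 0)
    (fun x hx => (hz.hasDerivWithinAt x hx).prodMk (hz.hasDerivWithinAt_deriv x hx))
    (fun x hx => (norm_mk_snd_mul_fst_le hK (hQK x hx) (z x, z' x)).trans_eq (add_zero _).symm) hx
  rwa [h0, h1, Prod.mk_zero_zero, norm_zero, gronwallBound_ε0_δ0, norm_le_zero_iff] at h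

theorem IsSolution.eqOn_zero (hz : IsSolution a b Q z z') (hQ : ContinuousOn Q (Icc a b))
    (h0 : z a = 0) (h1 : z' a = 0) : EqOn z 0 (Icc a b) :=
  fun _ hx => congrArg Prod.fst (hz.mk_eq_zero hQ h0 h1 hx)

/-- Coordinatewise projection of the plane onto the square `[-R, R]²`. It makes a linear vector
field bounded, as the Picard–Lindelöf theorem requires. -/
noncomputable def clamp (R : NNReal) (p : ℝ × ℝ) : ℝ × ℝ :=
  (projIcc (-R : ℝ) R (neg_le_self R.2) p.1, projIcc (-R : ℝ) R (neg_le_self R.2) p.2)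

theorem norm_clamp_sub_clamp_le (R : NNReal) (p r : ℝ × ℝ) :
    ‖clamp R p - clamp R r‖ ≤ ‖p - r‖ :=
  max_le_max (abs_projIcc_sub_projIcc (neg_le_self R.2))
    (abs_projIcc_sub_projIcc (neg_le_self R.2))

theorem norm_clamp_le (R : NNReal) (p : ℝ × ℝ) : ‖clamp R p‖ ≤ R :=
  max_le (abs_le.2 (projIcc (-R : ℝ) R (neg_le_self R.2) p.1).2)
    (abs_le.2 (projIcc (-R : ℝ) R (neg_le_self R.2) p.2).2)

theorem clamp_eq_self {R : NNReal} {p : ℝ × ℝ} (hp : ‖p‖ ≤ R) : clamp R p = p :=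
  Prod.ext
    (congrArg Subtype.val
      (projIcc_of_mem (neg_le_self R.2) (abs_le.1 ((norm_fst_le p).trans hp))))
    (congrArg Subtype.val
      (projIcc_of_mem (neg_le_self R.2) (abs_le.1 ((norm_snd_le p).trans hp))))

theorem norm_clamp_le_norm (R : NNReal) (p : ℝ × ℝ) : ‖clamp R p‖ ≤ ‖p‖ := by
  simpa [clamp_eq_self (show ‖(0 : ℝ × ℝ)‖ ≤ R by simp)] using norm_clamp_sub_clamp_le R p 0

theorem isPicardLindelof_clamp (hab : a ≤ b) (hQ : ContinuousOn Q (Icc a b)) {K : NNReal}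
    (hK : 1 ≤ K) (hQK : ∀ x ∈ Icc a b, |Q x| ≤ K) (R : NNReal) (p : ℝ × ℝ) :
    IsPicardLindelof (fun t r => ((clamp R r).2, Q t * (clamp R r).1))
      (⟨a, left_mem_Icc.2 hab⟩ : Icc a b) p (K * R * (b - a).toNNReal) 0 (K * R) K where
  lipschitzOnWith t ht := LipschitzOnWith.of_dist_le_mul fun r _ s _ => by
    rw [dist_eq_norm, dist_eq_norm, Prod.mk_sub_mk, ← mul_sub]
    exact (norm_mk_snd_mul_fst_le hK (hQK t ht) (clamp R r - clamp R s)).trans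
      (mul_le_mul_of_nonneg_left (norm_clamp_sub_clamp_le R r s) K.2)
  continuousOn r _ := continuousOn_const.prodMk (hQ.mul continuousOn_const)
  norm_le t ht r _ := (norm_mk_snd_mul_fst_le hK (hQK t ht) _).trans
    (mul_le_mul_of_nonneg_left (norm_clamp_le R r) K.2)
  mul_max_le := by simp [Real.coe_toNNReal _ (sub_nonneg.2 hab), hab]

theorem exists_isSolution_left (hab : a ≤ b) (hQ : ContinuousOn Q (Icc a b)) (c₀ c₁ : ℝ) :
    ∃ z z', IsSolution a b Q z z' ∧ z a = c₀ ∧ z' a = c₁ := by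
  obtain ⟨K, hK, hQK⟩ := exists_one_le_abs_le_of_continuousOn_Icc hQ
  lift K to NNReal using zero_le_one.trans hK
  set R : NNReal := ‖(c₀, c₁)‖₊ * (Real.exp (K * (b - a))).toNNReal
  obtain ⟨w, hwa, hw⟩ := (isPicardLindelof_clamp hab hQ (mod_cast hK) hQK R (c₀, c₁)
    ).exists_eq_forall_mem_Icc_hasDerivWithinAt₀
  have hwR : ∀ x ∈ Icc a b, ‖w x‖ ≤ R := by
    intro x hx
    have h := norm_le_gronwallBound_of_hasDerivWithinAt_Icc (K := K) (ε := 0) hw (fun t ht =>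
      (norm_mk_snd_mul_fst_le hK (hQK t ht) _).trans <| (mul_le_mul_of_nonneg_left
        (norm_clamp_le_norm R (w t)) K.2).trans_eq (add_zero _).symm) hx
    rw [gronwallBound_ε0, show w a = (c₀, c₁) from hwa] at h
    refine h.trans ?_
    simp only [R, NNReal.coe_mul, coe_nnnorm, Real.coe_toNNReal _ (Real.exp_pos _).le]
    gcongr
    exact hx.2
  have hw' : ∀ x ∈ Icc a b, HasDerivWithinAt w ((w x).2, Q x * (w x).1) (Icc a b) x := by
    intro x hx
    simpa only [clamp_eq_self (hwR x hx)] using hw x hx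
  exact ⟨fun x => (w x).1, fun x => (w x).2,
    ⟨fun x hx => (hw' x hx).fst, fun x hx => (hw' x hx).snd⟩,
    congrArg Prod.fst hwa, congrArg Prod.snd hwa⟩

theorem exists_isSolution_right (hab : a ≤ b) (hQ : ContinuousOn Q (Icc a b)) (c₀ c₁ : ℝ) :
    ∃ z z', IsSolution a b Q z z' ∧ z b = c₀ ∧ z' b = c₁ := by
  obtain ⟨z, z', hz, hz0, hz1⟩ := exists_isSolution_left hab hQ 1 0
  obtain ⟨w, w', hw, hw0, hw1⟩ := exists_isSolution_left hab hQ 0 1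
  have hW : z b * w' b - z' b * w b = 1 := by
    simpa [wronskian, hz0, hz1, hw0, hw1] using hz.wronskian_eq hw (right_mem_Icc.2 hab)
  refine ⟨_, _, hz.linearCombination hw (c₀ * w' b - c₁ * w b) (c₁ * z b - c₀ * z' b), ?_, ?_⟩
  · linear_combination c₀ * hW
  · linear_combination c₁ * hW

end Equation

/-! ### Integral operators -/

section IntegralOperator

variable {X H : Type*} [TopologicalSpace X] [CompactSpace X] [NormedAddCommGroup H]
  [InnerProductSpace ℝ H]

/-- The operator `f ↦ (x ↦ ⟪k x, f⟫)` from `H` to the continuous functions on `X`. For `H = L²`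
and `k x = G (x, ·)` it is the integral operator with kernel `G`. -/
noncomputable def innerOp (k : C(X, H)) : H →L[ℝ] C(X, ℝ) :=
  LinearMap.mkContinuous
    { toFun := fun f => ⟨fun x => inner ℝ (k x) f, by fun_prop⟩
      map_add' := fun f g => by ext x; exact inner_add_right _ _ _
      map_smul' := fun c f => by ext x; exact inner_smul_right _ _ _ } ‖k‖ fun f =>
    (ContinuousMap.norm_le _ (by positivity)).2 fun x =>
      (norm_inner_le_norm (𝕜 := ℝ) (k x) f).trans <| by gcongr; exact k.norm_coe_le_norm x

theorem isCompactOperator_innerOp (k : C(X, H)) : IsCompactOperator (innerOp k) := by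
  let e := (ContinuousMap.linearIsometryBoundedOfCompact X ℝ ℝ).toContinuousLinearEquiv
  let S : H →L[ℝ] BoundedContinuousFunction X ℝ := e.toContinuousLinearMap ∘L innerOp k
  suffices h : IsCompactOperator S by
    have he : e.symm ∘ S = innerOp k := funext fun f => e.symm_apply_apply (innerOp k f)
    exact he ▸ h.clm_comp e.symm.toContinuousLinearMap
  refine (isCompactOperator_iff_isCompact_closure_image_ball S.toLinearMap zero_lt_one).2 ?_
  refine BoundedContinuousFunction.arzela_ascoli (Metric.closedBall 0 (‖innerOp k‖ * 1))
    (isCompact_closedBall _ _) _ ?_ fun x => Metric.equicontinuousAt_iff_right.2 fun ε hε => ?_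
  · rintro _ x ⟨f, hf, rfl⟩
    rw [mem_ball_zero_iff] at hf
    exact mem_closedBall_zero_iff.2 (((innerOp k f).norm_coe_le_norm x).trans
      ((innerOp k).le_opNorm_of_le hf.le))
  · filter_upwards [k.continuous.continuousAt.eventually (Metric.ball_mem_nhds (k x) hε)] with y hy
    rintro ⟨_, f, hf, rfl⟩
    rw [mem_ball_zero_iff] at hf
    rw [dist_comm, dist_eq_norm] at hy
    calc dist (inner ℝ (k x) f) (inner ℝ (k y) f) = ‖inner ℝ (k x - k y) f‖ := by
          rw [dist_eq_norm, inner_sub_left]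
      _ ≤ ‖k x - k y‖ * 1 := (norm_inner_le_norm _ _).trans (by gcongr)
      _ < ε := by rwa [mul_one]

end IntegralOperator

section Kernel

variable {X : Type*} [TopologicalSpace X] [CompactSpace X] [MeasurableSpace X] [BorelSpace X]
  (μ : Measure X) [IsFiniteMeasure μ]

theorem inner_toLp_eq_integral (g : C(X, ℝ)) (f : Lp ℝ 2 μ) :
    inner ℝ (ContinuousMap.toLp (E := ℝ) 2 μ ℝ g) f = ∫ x, g x * f x ∂μ := by
  rw [L2.inner_def]
  refine integral_congr_ae ?_
  filter_upwards [ContinuousMap.coeFn_toLp (p := 2) (𝕜 := ℝ) μ g] with x hx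
  rw [hx]
  exact mul_comm _ _

/-- The integral operator with continuous kernel `G`, from `L²` to continuous functions. -/
noncomputable def kernelOp (G : C(X × X, ℝ)) : Lp ℝ 2 μ →L[ℝ] C(X, ℝ) :=
  innerOp ⟨fun x => ContinuousMap.toLp (E := ℝ) 2 μ ℝ (G.curry x),
    (ContinuousMap.toLp (E := ℝ) 2 μ ℝ).continuous.comp G.curry.continuous⟩

/-- The integral operator with continuous kernel `G`, as an operator on `L²`. -/
noncomputable def kernelOpL2 (G : C(X × X, ℝ)) : Lp ℝ 2 μ →L[ℝ] Lp ℝ 2 μ :=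
  ContinuousMap.toLp (E := ℝ) 2 μ ℝ ∘L kernelOp μ G

variable {μ}

theorem kernelOp_apply (G : C(X × X, ℝ)) (f : Lp ℝ 2 μ) (x : X) :
    kernelOp μ G f x = ∫ t, G (x, t) * f t ∂μ :=
  inner_toLp_eq_integral μ (G.curry x) f

theorem isCompactOperator_kernelOpL2 (G : C(X × X, ℝ)) : IsCompactOperator (kernelOpL2 μ G) :=
  (isCompactOperator_innerOp _).clm_comp (ContinuousMap.toLp (E := ℝ) 2 μ ℝ)

theorem inner_kernelOpL2 (G : C(X × X, ℝ)) (f g : Lp ℝ 2 μ) :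
    inner ℝ (kernelOpL2 μ G f) g = ∫ x, ∫ t, G (x, t) * (f t * g x) ∂μ ∂μ := by
  refine (inner_toLp_eq_integral μ _ g).trans (integral_congr_ae (ae_of_all _ fun x => ?_))
  calc kernelOp μ G f x * g x = ∫ t, G (x, t) * f t * g x ∂μ := by
        rw [kernelOp_apply, integral_mul_const]
    _ = ∫ t, G (x, t) * (f t * g x) ∂μ := by simp only [mul_assoc]

theorem isSymmetric_kernelOpL2 [SecondCountableTopology X] {G : C(X × X, ℝ)}
    (hG : ∀ x t, G (x, t) = G (t, x)) :
    (kernelOpL2 μ G : Lp ℝ 2 μ →ₗ[ℝ] Lp ℝ 2 μ).IsSymmetric := by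
  intro f g
  change inner ℝ (kernelOpL2 μ G f) g = inner ℝ f (kernelOpL2 μ G g)
  have hf : Integrable f μ := (Lp.memLp f).integrable one_le_two
  have hg : Integrable g μ := (Lp.memLp g).integrable one_le_two
  rw [real_inner_comm _ f, inner_kernelOpL2, inner_kernelOpL2, integral_integral_swap]
  · simp only [hG, mul_comm (g _)]
  · exact (hf.mul_prod hg).swap.bdd_mul (c := ‖G‖) G.continuous.aestronglyMeasurable
      (ae_of_all _ fun p => G.norm_coe_le_norm p)

theorem exists_continuous_eigenvector {G : C(X × X, ℝ)} {ν : ℝ} (hν : ν ≠ 0) {f : Lp ℝ 2 μ}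
    (hf : kernelOpL2 μ G f = ν • f) :
    ∃ g : C(X, ℝ), ContinuousMap.toLp (E := ℝ) 2 μ ℝ g = f ∧
      kernelOp μ G (ContinuousMap.toLp (E := ℝ) 2 μ ℝ g) = ν • g := by
  have h : ContinuousMap.toLp (E := ℝ) 2 μ ℝ (ν⁻¹ • kernelOp μ G f) = f := by
    rw [map_smul]
    exact (inv_smul_eq_iff₀ hν).2 hf
  exact ⟨_, h, by rw [h, smul_inv_smul₀ hν]⟩

end Kernel

theorem orthogonal_eq_bot_of_eigenvectors_mem {H : Type*} [NormedAddCommGroup H]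
    [InnerProductSpace ℝ H] [CompleteSpace H] {T : H →L[ℝ] H} (hT : IsCompactOperator T)
    (hsymm : (T : H →ₗ[ℝ] H).IsSymmetric) (hinj : ∀ f, T f = 0 → f = 0) {V : Submodule ℝ H}
    (hV : ∀ ν : ℝ, ν ≠ 0 → ∀ f, T f = ν • f → f ∈ V) : Vᗮ = ⊥ := by
  have hle : ⨆ ν, Module.End.eigenspace (T : H →ₗ[ℝ] H) ν ≤ V := by
    refine iSup_le fun ν f hf => ?_
    have hf : T f = ν • f := Module.End.mem_eigenspace_iff.1 hf
    rcases eq_or_ne ν 0 with rfl | hν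
    · exact hinj f (hf.trans (zero_smul ℝ f)) ▸ V.zero_mem
    · exact hV ν hν f hf
  exact eq_bot_iff.2 ((Submodule.orthogonal_le hle).trans
    (ContinuousLinearMap.orthogonalComplement_iSup_eigenspaces_eq_bot hT hsymm).le)

/-! ### Green's function -/

section SquareIntegrable

attribute [local instance] Measure.Subtype.measureSpace

variable {a b : ℝ} {g : ℝ → ℝ}

instance : IsFiniteMeasure (volume : Measure (Icc a b)) :=
  ⟨by simp [Measure.Subtype.volume_univ measurableSet_Icc.nullMeasurableSet]⟩

theorem integral_subtype_Icc (hab : a ≤ b) (F : ℝ → ℝ) :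
    ∫ x : Icc a b, F x = ∫ x in a..b, F x := by
  rw [intervalIntegral.integral_of_le hab, ← integral_Icc_eq_integral_Ioc]
  exact integral_subtype_comap measurableSet_Icc F

/-- The class in `L²(a, b)` of a function on the line that is continuous on `[a, b]`. The space
`L²(a, b)` is taken over the subtype `Icc a b`, which is compact. -/
noncomputable def toL2 (hg : ContinuousOn g (Icc a b)) : Lp ℝ 2 (volume : Measure (Icc a b)) :=
  ContinuousMap.toLp (E := ℝ) 2 volume ℝ ⟨(Icc a b).domRestrict g, hg.domRestrict⟩

theorem toL2_eq_smul {f : ℝ → ℝ} {c : ℝ} (hf : ContinuousOn f (Icc a b))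
    (hg : ContinuousOn g (Icc a b)) (h : EqOn f (c • g) (Icc a b)) : toL2 hf = c • toL2 hg := by
  rw [toL2, toL2, ← map_smul]
  exact congrArg (ContinuousMap.toLp (E := ℝ) 2 volume ℝ) (ContinuousMap.ext fun x => h x.2)

theorem inner_toL2 (hg : ContinuousOn g (Icc a b)) (f : Lp ℝ 2 (volume : Measure (Icc a b))) :
    inner ℝ (toL2 hg) f = ∫ x : Icc a b, g x * f x :=
  inner_toLp_eq_integral volume _ f

theorem coeFn_toL2 (hg : ContinuousOn g (Icc a b)) : ∀ᵐ x : Icc a b, toL2 hg x = g x :=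
  ContinuousMap.coeFn_toLp (p := 2) (𝕜 := ℝ) volume ⟨(Icc a b).domRestrict g, hg.domRestrict⟩

theorem inner_toL2_toL2 (hab : a ≤ b) {f : ℝ → ℝ} (hf : ContinuousOn f (Icc a b))
    (hg : ContinuousOn g (Icc a b)) : inner ℝ (toL2 hf) (toL2 hg) = ∫ x in a..b, f x * g x := by
  rw [inner_toL2, ← integral_subtype_Icc hab]
  exact integral_congr_ae ((coeFn_toL2 hg).mono fun x hx => congrArg (f x * ·) hx)

open scoped ContDiff in
theorem eq_zero_of_inner_contDiff_eq_zero {f : Lp ℝ 2 (volume : Measure (Icc a b))}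
    (h : ∀ φ : ℝ → ℝ, ContDiff ℝ ∞ φ → tsupport φ ⊆ Ioo a b →
      ∫ x : Icc a b, φ x * f x = 0) : f = 0 := by
  have he : MeasurableEmbedding (Subtype.val : Icc a b → ℝ) :=
    .subtype_coe measurableSet_Icc
  let F : ℝ → ℝ := Function.extend Subtype.val f 0
  have hF : ∀ x : Icc a b, F x = f x := Subtype.val_injective.extend_apply f 0
  have hF_int : IntegrableOn F (Icc a b) := by
    rw [he.integrableOn_iff_comap (Subtype.range_coe_subtype ▸ Subset.rfl)]
    have hf : Integrable f := (Lp.memLp f).integrable one_le_two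
    exact (hf.congr (ae_of_all _ fun x => (hF x).symm)).integrableOn
  have hF_zero : ∀ᵐ x, x ∈ Ioo a b → F x = 0 := by
    refine isOpen_Ioo.ae_eq_zero_of_integral_contDiff_smul_eq_zero
      (hF_int.mono_set Ioo_subset_Icc_self).locallyIntegrableOn fun φ hφ _ hsupp => ?_
    rw [← setIntegral_eq_integral_of_forall_compl_eq_zero (s := Icc a b), ← h φ hφ hsupp]
    · exact (integral_subtype_comap measurableSet_Icc fun x => φ x • F x).symm.trans
        (integral_congr_ae (ae_of_all _ fun x => congrArg (φ x * ·) (hF x)))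
    · intro x hx
      rw [image_eq_zero_of_notMem_tsupport fun hx' => hx (Ioo_subset_Icc_self (hsupp hx')),
        zero_smul]
  rw [← ae_restrict_iff' measurableSet_Ioo, restrict_Ioo_eq_restrict_Icc,
    ← map_comap_subtype_coe measurableSet_Icc, he.ae_map_iff] at hF_zero
  refine Lp.ext ?_
  filter_upwards [hF_zero, Lp.coeFn_zero ℝ 2 (volume : Measure (Icc a b))] with x hx h0
  rw [h0, ← hF, hx, Pi.zero_apply]

end SquareIntegrable

section Green

attribute [local instance] Measure.Subtype.measureSpace

variable {a b : ℝ} {Q u u' v v' ψ : ℝ → ℝ}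

/-- Variation of constants for `z'' = Q z - ψ`: if `u` and `v` solve `z'' = Q z`, this is the
Wronskian of `v` and `u` times the solution which is proportional to `u` at `a` and to `v` at
`b`. -/
noncomputable def greenOp (a b : ℝ) (u v ψ : ℝ → ℝ) (x : ℝ) : ℝ :=
  v x * (∫ t in a..x, u t * ψ t) + u x * ∫ t in x..b, v t * ψ t

theorem greenOp_eq (hab : a ≤ b) (hQ : ContinuousOn Q (Icc a b)) (hu : IsSolution a b Q u u')
    (hv : IsSolution a b Q v v') {φ φ' φ'' : ℝ → ℝ}
    (hφ : ∀ x ∈ Icc a b, HasDerivWithinAt φ (φ' x) (Icc a b) x)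
    (hφ' : ∀ x ∈ Icc a b, HasDerivWithinAt φ' (φ'' x) (Icc a b) x)
    (hφ'' : ContinuousOn φ'' (Icc a b)) (ha : wronskian u u' φ φ' a = 0)
    (hb : wronskian v v' φ φ' b = 0) {x : ℝ} (hx : x ∈ Icc a b) :
    greenOp a b u v (fun t => Q t * φ t - φ'' t) x = wronskian v v' u u' a * φ x := by
  have hcont : ContinuousOn (fun t => Q t * φ t - φ'' t) (Icc a b) :=
    (hQ.mul fun x hx => (hφ x hx).continuousWithinAt).sub hφ''
  have hderiv : ∀ {w w' : ℝ → ℝ}, IsSolution a b Q w w' → ∀ x ∈ Icc a b,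
      HasDerivWithinAt (fun x => -wronskian w w' φ φ' x) (w x * (Q x * φ x - φ'' x))
        (Icc a b) x := fun hw x hx =>
    (hw.hasDerivWithinAt_wronskian hx (hφ x hx) (hφ' x hx)).neg.congr_deriv (by ring)
  have hleft : ∫ t in a..x, u t * (Q t * φ t - φ'' t) = -wronskian u u' φ φ' x := by
    have h := integral_eq_sub_of_hasDerivWithinAt_Icc (hu.continuousOn.mul hcont) (hderiv hu)
      (left_mem_Icc.2 hab) hx
    rwa [ha, neg_zero, sub_zero] at h
  have hright : ∫ t in x..b, v t * (Q t * φ t - φ'' t) = wronskian v v' φ φ' x := by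
    have h := integral_eq_sub_of_hasDerivWithinAt_Icc (hv.continuousOn.mul hcont) (hderiv hv)
      hx (right_mem_Icc.2 hab)
    rwa [hb, neg_zero, zero_sub, neg_neg] at h
  rw [greenOp, hleft, hright, ← hv.wronskian_eq hu hx]
  simp only [wronskian]
  ring

theorem hasDerivWithinAt_mul_integral_add_mul_integral {p r : ℝ → ℝ} {p₀ r₀ x : ℝ} (hab : a ≤ b)
    (hu : ContinuousOn u (Icc a b)) (hv : ContinuousOn v (Icc a b))
    (hψ : ContinuousOn ψ (Icc a b)) (hx : x ∈ Icc a b)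
    (hp : HasDerivWithinAt p p₀ (Icc a b) x) (hr : HasDerivWithinAt r r₀ (Icc a b) x) :
    HasDerivWithinAt (fun x => r x * (∫ t in a..x, u t * ψ t) + p x * ∫ t in x..b, v t * ψ t)
      (r₀ * (∫ t in a..x, u t * ψ t) + p₀ * (∫ t in x..b, v t * ψ t)
        + (r x * u x - p x * v x) * ψ x) (Icc a b) x := by
  have hleft : HasDerivWithinAt (fun x => ∫ t in a..x, u t * ψ t) (u x * ψ x) (Icc a b) x :=
    hasDerivWithinAt_integral_Icc (hu.mul hψ) (left_mem_Icc.2 hab) hx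
  have hright : HasDerivWithinAt (fun x => ∫ t in x..b, v t * ψ t) (-(v x * ψ x)) (Icc a b) x := by
    simpa only [← intervalIntegral.integral_symm] using
      (hasDerivWithinAt_integral_Icc (g := fun t => v t * ψ t) (hv.mul hψ)
        (right_mem_Icc.2 hab) hx).fun_neg
  exact ((hr.mul hleft).add (hp.mul hright)).congr_deriv (by ring)

theorem exists_isSolution_of_eq_mul_greenOp {g : ℝ → ℝ} {κ : ℝ} (hab : a ≤ b)
    (hu : IsSolution a b Q u u') (hv : IsSolution a b Q v v') (hg : ContinuousOn g (Icc a b))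
    (h : ∀ x ∈ Icc a b, g x = κ * greenOp a b u v g x) :
    ∃ g', IsSolution a b (fun x => Q x - κ * wronskian v v' u u' a) g g' ∧
      wronskian u u' g g' a = 0 ∧ wronskian v v' g g' b = 0 := by
  refine ⟨fun x => κ * (v' x * (∫ t in a..x, u t * g t) + u' x * ∫ t in x..b, v t * g t),
    ⟨fun x hx => ?_, fun x hx => ?_⟩, ?_, ?_⟩
  · refine (((hasDerivWithinAt_mul_integral_add_mul_integral hab hu.continuousOn hv.continuousOn hg
      hx (hu.hasDerivWithinAt x hx) (hv.hasDerivWithinAt x hx)).const_mul κ).congr h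
      (h x hx)).congr_deriv ?_
    ring
  · refine ((hasDerivWithinAt_mul_integral_add_mul_integral hab hu.continuousOn hv.continuousOn hg
      hx (hu.hasDerivWithinAt_deriv x hx) (hv.hasDerivWithinAt_deriv x hx)).const_mul κ
      ).congr_deriv ?_
    have hgx := h x hx
    have hW := hv.wronskian_eq hu hx
    simp only [greenOp, wronskian] at hgx hW ⊢
    linear_combination -Q x * hgx - κ * g x * hW
  · simp only [wronskian, h a (left_mem_Icc.2 hab), greenOp, intervalIntegral.integral_same]
    ring
  · simp only [wronskian, h b (right_mem_Icc.2 hab), greenOp, intervalIntegral.integral_same]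
    ring

/-- The symmetric kernel of the operator `greenOp`. -/
noncomputable def greenKernel (hu : ContinuousOn u (Icc a b)) (hv : ContinuousOn v (Icc a b)) :
    C(Icc a b × Icc a b, ℝ) :=
  ⟨fun p => u (min p.1 p.2 : Icc a b) * v (max p.1 p.2 : Icc a b),
    (hu.domRestrict.comp (continuous_fst.min continuous_snd)).mul
      (hv.domRestrict.comp (continuous_fst.max continuous_snd))⟩

theorem greenKernel_apply (hu : ContinuousOn u (Icc a b)) (hv : ContinuousOn v (Icc a b))
    (x t : Icc a b) :
    greenKernel hu hv (x, t) = u (min (x : ℝ) t) * v (max (x : ℝ) t) := by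
  have hmono : Monotone (Subtype.val : Icc a b → ℝ) := fun _ _ h => h
  rw [← hmono.map_min, ← hmono.map_max]
  rfl

theorem greenKernel_symm (hu : ContinuousOn u (Icc a b)) (hv : ContinuousOn v (Icc a b))
    (x t : Icc a b) : greenKernel hu hv (x, t) = greenKernel hu hv (t, x) := by
  rw [greenKernel_apply, greenKernel_apply, min_comm, max_comm]

theorem kernelOp_greenKernel_toL2 (hab : a ≤ b) (hu : ContinuousOn u (Icc a b))
    (hv : ContinuousOn v (Icc a b)) (hψ : ContinuousOn ψ (Icc a b)) (x : Icc a b) :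
    kernelOp volume (greenKernel hu hv) (toL2 hψ) x = greenOp a b u v ψ x := by
  obtain ⟨x, hx⟩ := x
  have hmin : ContinuousOn (fun t => u (min x t)) (Icc a b) :=
    hu.comp (by fun_prop) fun t ht => ⟨le_min hx.1 ht.1, (min_le_left _ _).trans hx.2⟩
  have hmax : ContinuousOn (fun t => v (max x t)) (Icc a b) :=
    hv.comp (by fun_prop) fun t ht => ⟨hx.1.trans (le_max_left _ _), max_le hx.2 ht.2⟩
  have hF : ContinuousOn (fun t => u (min x t) * v (max x t) * ψ t) (Icc a b) :=
    (hmin.mul hmax).mul hψ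
  have ha : a ∈ Icc a b := left_mem_Icc.2 hab
  have hb : b ∈ Icc a b := right_mem_Icc.2 hab
  calc kernelOp volume (greenKernel hu hv) (toL2 hψ) ⟨x, hx⟩
      = ∫ t : Icc a b, u (min x t) * v (max x t) * ψ t := by
        rw [kernelOp_apply]
        refine integral_congr_ae ((coeFn_toL2 hψ).mono fun t ht => ?_)
        simp only [ht, greenKernel_apply]
    _ = (∫ t in a..x, u (min x t) * v (max x t) * ψ t)
        + ∫ t in x..b, u (min x t) * v (max x t) * ψ t := by
        rw [integral_subtype_Icc hab fun t => u (min x t) * v (max x t) * ψ t,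
          intervalIntegral.integral_add_adjacent_intervals
            (intervalIntegrable_of_continuousOn_Icc hF ha hx)
            (intervalIntegrable_of_continuousOn_Icc hF hx hb)]
    _ = greenOp a b u v ψ x := by
        rw [greenOp, ← intervalIntegral.integral_const_mul, ← intervalIntegral.integral_const_mul]
        congr 1 <;> refine intervalIntegral.integral_congr fun t ht => ?_
        · rw [uIcc_of_le hx.1] at ht
          simp only [min_eq_right ht.2, max_eq_left ht.2]
          ring
        · rw [uIcc_of_le hx.2] at ht
          simp only [min_eq_left ht.1, max_eq_right ht.1]
          ring

theorem kernelOpL2_greenKernel_toL2 (hab : a ≤ b) (hu : ContinuousOn u (Icc a b))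
    (hv : ContinuousOn v (Icc a b)) (hψ : ContinuousOn ψ (Icc a b)) {φ : ℝ → ℝ}
    (hφ : ContinuousOn φ (Icc a b)) (h : EqOn (greenOp a b u v ψ) φ (Icc a b)) :
    kernelOpL2 volume (greenKernel hu hv) (toL2 hψ) = toL2 hφ :=
  congrArg (ContinuousMap.toLp (E := ℝ) 2 volume ℝ) <| ContinuousMap.ext fun x =>
    (kernelOp_greenKernel_toL2 hab hu hv hψ x).trans (h x.2)

open scoped ContDiff in
theorem eq_zero_of_kernelOpL2_greenKernel_eq_zero (hab : a ≤ b) (hQ : ContinuousOn Q (Icc a b))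
    (hu : IsSolution a b Q u u') (hv : IsSolution a b Q v v') (hW : wronskian v v' u u' a ≠ 0)
    {f : Lp ℝ 2 (volume : Measure (Icc a b))}
    (hf : kernelOpL2 volume (greenKernel hu.continuousOn hv.continuousOn) f = 0) : f = 0 := by
  have hu_cont := hu.continuousOn
  have hv_cont := hv.continuousOn
  refine eq_zero_of_inner_contDiff_eq_zero fun φ hφ hsupp => ?_
  obtain ⟨hφ_diff, hφ'⟩ := contDiff_infty_iff_deriv.1 hφ
  obtain ⟨hφ'_diff, hφ''⟩ := contDiff_infty_iff_deriv.1 hφ'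
  have hvanish : ∀ x ∉ Ioo a b, φ x = 0 ∧ deriv φ x = 0 := fun x hx =>
    ⟨image_eq_zero_of_notMem_tsupport fun h => hx (hsupp h),
      image_eq_zero_of_notMem_tsupport fun h => hx (hsupp (tsupport_deriv_subset h))⟩
  have hwronskian : ∀ {w w' : ℝ → ℝ}, ∀ x ∉ Ioo a b, wronskian w w' φ (deriv φ) x = 0 := by
    intro w w' x hx
    rw [wronskian, (hvanish x hx).1, (hvanish x hx).2, mul_zero, mul_zero, sub_zero]
  have hcont : ContinuousOn φ (Icc a b) := hφ_diff.continuous.continuousOn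
  have hψ : ContinuousOn (fun t => Q t * φ t - deriv (deriv φ) t) (Icc a b) :=
    (hQ.mul hcont).sub hφ''.continuous.continuousOn
  have hsolve : EqOn (greenOp a b u v fun t => Q t * φ t - deriv (deriv φ) t)
      (wronskian v v' u u' a • φ) (Icc a b) := fun x hx =>
    greenOp_eq hab hQ hu hv (fun x _ => (hφ_diff x).hasDerivAt.hasDerivWithinAt)
      (fun x _ => (hφ'_diff x).hasDerivAt.hasDerivWithinAt) hφ''.continuous.continuousOn
      (hwronskian a (by simp)) (hwronskian b (by simp)) hx
  have horth : wronskian v v' u u' a * inner ℝ (toL2 hcont) f = 0 := by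
    rw [← real_inner_smul_left, ← toL2_eq_smul (hcont.const_smul _) hcont fun _ _ => rfl,
      ← kernelOpL2_greenKernel_toL2 hab hu_cont hv_cont hψ (hcont.const_smul _) hsolve]
    refine (isSymmetric_kernelOpL2 (greenKernel_symm hu_cont hv_cont) _ f).trans ?_
    rw [ContinuousLinearMap.coe_coe, hf, inner_zero_right]
  exact (inner_toL2 hcont f).symm.trans ((mul_eq_zero.1 horth).resolve_left hW)

theorem orthogonal_eq_bot_of_eigenfunctions_mem (hab : a ≤ b) (hQ : ContinuousOn Q (Icc a b))
    (hu : IsSolution a b Q u u') (hv : IsSolution a b Q v v') (hW : wronskian v v' u u' a ≠ 0)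
    {V : Submodule ℝ (Lp ℝ 2 (volume : Measure (Icc a b)))}
    (hV : ∀ (μ : ℝ) (g g' : ℝ → ℝ) (hg : IsSolution a b (fun x => Q x - μ) g g'),
      wronskian u u' g g' a = 0 → wronskian v v' g g' b = 0 → toL2 hg.continuousOn ∈ V) :
    Vᗮ = ⊥ := by
  have hu_cont := hu.continuousOn
  have hv_cont := hv.continuousOn
  refine orthogonal_eq_bot_of_eigenvectors_mem
    (isCompactOperator_kernelOpL2 (greenKernel hu_cont hv_cont))
    (isSymmetric_kernelOpL2 (greenKernel_symm hu_cont hv_cont))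
    (fun f hf => eq_zero_of_kernelOpL2_greenKernel_eq_zero hab hQ hu hv hW hf) ?_
  intro ν hν f hf
  obtain ⟨g, rfl, hg⟩ := exists_continuous_eigenvector hν hf
  have hG_cont : ContinuousOn (IccExtend hab g) (Icc a b) := g.continuous.Icc_extend'.continuousOn
  have hG : toL2 hG_cont = ContinuousMap.toLp (E := ℝ) 2 volume ℝ g :=
    congrArg (ContinuousMap.toLp (E := ℝ) 2 volume ℝ)
      (ContinuousMap.ext fun x => IccExtend_val hab g x)
  have hfix : ∀ x ∈ Icc a b, IccExtend hab g x = ν⁻¹ * greenOp a b u v (IccExtend hab g) x := by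
    intro x hx
    have h := DFunLike.congr_fun hg ⟨x, hx⟩
    rw [← hG, kernelOp_greenKernel_toL2 hab] at h
    rw [IccExtend_of_mem hab _ hx, h]
    exact (inv_mul_cancel_left₀ hν _).symm
  obtain ⟨g', hg', ha, hb⟩ := exists_isSolution_of_eq_mul_greenOp hab hu hv hG_cont hfix
  exact hG ▸ hV _ _ g' hg' ha hb

end Green

/-! ### The orthonormal basis of eigenfunctions -/

/-- The eigenvalues `lam` and normalised eigenfunctions `y` (with derivatives `y'`) of
`-z'' + q z = μ z` on `[a, b]` with `z'(a) = h z(a)` and `z(b) cos β + z'(b) sin β = 0`. This is the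
general separated problem whose condition at `a` is not the Dirichlet one, with `h = -cot α`. -/
structure IsRobinEigensystem (a b : ℝ) (q : ℝ → ℝ) (h β : ℝ) (lam : ℕ → ℝ) (y y' : ℕ → ℝ → ℝ) :
    Prop where
  lt : a < b
  continuousOn_potential : ContinuousOn q (Icc a b)
  isSolution : ∀ n, IsSolution a b (fun x => q x - lam n) (y n) (y' n)
  left : ∀ n, y' n a = h * y n a
  right : ∀ n, y n b * Real.cos β + y' n b * Real.sin β = 0
  integral_sq : ∀ n, ∫ x in a..b, y n x ^ 2 = 1
  strictMono : StrictMono lam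
  complete : ∀ μ z z', IsSolution a b (fun x => q x - μ) z z' → z' a = h * z a →
    z b * Real.cos β + z' b * Real.sin β = 0 → (∃ x ∈ Icc a b, z x ≠ 0) → ∃ n, lam n = μ

section Indicator

attribute [local instance] Measure.Subtype.measureSpace

variable {a b s t : ℝ}

/-- The indicator of `[a, s]` in `L²(a, b)`. -/
noncomputable def indicatorL2 (hs : s ∈ Icc a b) : Lp ℝ 2 (volume : Measure (Icc a b)) :=
  indicatorConstLp 2 (measurableSet_Iic (a := (⟨s, hs⟩ : Icc a b))) (measure_ne_top volume _) 1

theorem inner_indicatorL2_toL2 (hs : s ∈ Icc a b) {g : ℝ → ℝ} (hg : ContinuousOn g (Icc a b)) :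
    inner ℝ (indicatorL2 hs) (toL2 hg) = ∫ x in a..s, g x := by
  rw [indicatorL2, L2.inner_indicatorConstLp_one, setIntegral_congr_ae measurableSet_Iic
    ((coeFn_toL2 hg).mono fun x hx _ => hx), ← integral_indicator measurableSet_Iic,
    ← intervalIntegral.integral_indicator hs, ← integral_subtype_Icc (hs.1.trans hs.2)]
  rfl

theorem inner_indicatorL2_indicatorL2 (hs : s ∈ Icc a b) (ht : t ∈ Icc a b) (hst : s ≤ t) :
    inner ℝ (indicatorL2 hs) (indicatorL2 ht) = s - a := by
  have hinter : Iic (⟨s, hs⟩ : Icc a b) ∩ Iic ⟨t, ht⟩ = Iic ⟨s, hs⟩ :=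
    inter_eq_left.2 (Iic_subset_Iic.2 hst)
  have himage : Subtype.val '' Iic (⟨s, hs⟩ : Icc a b) = Icc a s := by
    ext x
    exact ⟨fun ⟨z, hz, hzx⟩ => hzx ▸ ⟨z.2.1, hz⟩, fun hx => ⟨⟨x, hx.1, hx.2.trans hs.2⟩, hx.2, rfl⟩⟩
  rw [indicatorL2, indicatorL2, L2.real_inner_indicatorConstLp_one_indicatorConstLp_one, hinter,
    measureReal_def, Measure.Subtype.volume_def,
    (MeasurableEmbedding.subtype_coe measurableSet_Icc).comap_apply, himage, Real.volume_Icc,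
    ENNReal.toReal_ofReal (sub_nonneg.2 hs.1)]

end Indicator

theorem wronskian_eq_zero_of_boundary {z z' w w' : ℝ → ℝ} {β x : ℝ}
    (hz : z x * Real.cos β + z' x * Real.sin β = 0)
    (hw : w x * Real.cos β + w' x * Real.sin β = 0) : wronskian z z' w w' x = 0 := by
  unfold wronskian
  linear_combination (-(z x * w' x - z' x * w x)) * Real.sin_sq_add_cos_sq β
    + Real.cos β * (w' x * hz - z' x * hw) + Real.sin β * (z x * hw - w x * hz)

namespace IsRobinEigensystem

attribute [local instance] Measure.Subtype.measureSpace

variable {a b : ℝ} {q : ℝ → ℝ} {h β : ℝ} {lam : ℕ → ℝ} {y y' : ℕ → ℝ → ℝ}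

theorem continuousOn (D : IsRobinEigensystem a b q h β lam y y') (n : ℕ) :
    ContinuousOn (y n) (Icc a b) :=
  (D.isSolution n).continuousOn

theorem ne_zero_left (D : IsRobinEigensystem a b q h β lam y y') (n : ℕ) : y n a ≠ 0 := by
  intro h0
  have hz := (D.isSolution n).eqOn_zero (D.continuousOn_potential.sub continuousOn_const) h0
    (by rw [D.left, h0, mul_zero])
  have hint : ∫ x in a..b, y n x ^ 2 = ∫ _ in a..b, (0 : ℝ) :=
    intervalIntegral.integral_congr fun x hx => by
      simp [hz (uIcc_of_le D.lt.le ▸ hx)]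
  simp [D.integral_sq] at hint

theorem eqOn_smul (D : IsRobinEigensystem a b q h β lam y y') {n : ℕ} {z z' : ℝ → ℝ}
    (hz : IsSolution a b (fun x => q x - lam n) z z') (hza : z' a = h * z a) :
    EqOn z ((z a / y n a) • y n) (Icc a b) := by
  intro x hx
  have hzero := (hz.linearCombination (D.isSolution n) (y n a) (-z a)).eqOn_zero
    (D.continuousOn_potential.sub continuousOn_const) (by ring) (by rw [hza, D.left]; ring) hx
  have hy := D.ne_zero_left n
  simp only [Pi.zero_apply] at hzero
  simp only [Pi.smul_apply, smul_eq_mul]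
  field_simp
  linarith

theorem integral_mul_eq_zero (D : IsRobinEigensystem a b q h β lam y y') {n m : ℕ} (hnm : n ≠ m) :
    ∫ x in a..b, y n x * y m x = 0 := by
  have hl : lam n - lam m ≠ 0 := sub_ne_zero.2 (D.strictMono.injective.ne hnm)
  have hint := (D.isSolution n).integral_mul_eq_wronskian_sub (D.isSolution m) D.lt.le
    (D.continuousOn_potential.sub continuousOn_const)
    (D.continuousOn_potential.sub continuousOn_const)
  have ha : wronskian (y n) (y' n) (y m) (y' m) a = 0 := by
    unfold wronskian; rw [D.left, D.left]; ring
  rw [wronskian_eq_zero_of_boundary (D.right n) (D.right m), ha, sub_zero] at hint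
  have hfactor : ∀ x, y n x * ((q x - lam m - (q x - lam n)) * y m x)
      = (lam n - lam m) * (y n x * y m x) := fun x => by ring
  simp only [hfactor, intervalIntegral.integral_const_mul] at hint
  exact (mul_eq_zero.1 hint).resolve_left hl

theorem orthonormal (D : IsRobinEigensystem a b q h β lam y y') :
    Orthonormal ℝ fun n => toL2 (D.continuousOn n) := by
  rw [orthonormal_iff_ite]
  intro n m
  rw [inner_toL2_toL2 D.lt.le]
  split_ifs with hnm
  · subst hnm
    simpa only [sq] using D.integral_sq n
  · exact D.integral_mul_eq_zero hnm

/-- The shift of the potential makes `0` lie below the spectrum, so that Green's function exists. -/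
theorem exists_greenPair (D : IsRobinEigensystem a b q h β lam y y') :
    ∃ u u' v v' : ℝ → ℝ, IsSolution a b (fun x => q x - (lam 0 - 1)) u u' ∧
      IsSolution a b (fun x => q x - (lam 0 - 1)) v v' ∧ (u a = 1 ∧ u' a = h) ∧
      (v b = Real.sin β ∧ v' b = -Real.cos β) ∧ wronskian v v' u u' a ≠ 0 := by
  have hQ : ContinuousOn (fun x => q x - (lam 0 - 1)) (Icc a b) :=
    D.continuousOn_potential.sub continuousOn_const
  obtain ⟨u, u', hu, hu0, hu1⟩ := exists_isSolution_left D.lt.le hQ 1 h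
  obtain ⟨v, v', hv, hv0, hv1⟩ := exists_isSolution_right D.lt.le hQ (Real.sin β) (-Real.cos β)
  refine ⟨u, u', v, v', hu, hv, ⟨hu0, hu1⟩, ⟨hv0, hv1⟩, fun hW => ?_⟩
  rw [← hv.wronskian_eq hu (right_mem_Icc.2 D.lt.le), wronskian, hv0, hv1] at hW
  obtain ⟨n, hn⟩ := D.complete _ u u' hu (by rw [hu0, hu1, mul_one]) (by linarith)
    ⟨a, left_mem_Icc.2 D.lt.le, by rw [hu0]; exact one_ne_zero⟩
  linarith [D.strictMono.monotone (Nat.zero_le n)]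

theorem orthogonal_span_eq_bot (D : IsRobinEigensystem a b q h β lam y y') :
    (Submodule.span ℝ (range fun n => toL2 (D.continuousOn n)))ᗮ = ⊥ := by
  obtain ⟨u, u', v, v', hu, hv, ⟨hu0, hu1⟩, ⟨hv0, hv1⟩, hW⟩ := D.exists_greenPair
  have hQ : ContinuousOn (fun x => q x - (lam 0 - 1)) (Icc a b) :=
    D.continuousOn_potential.sub continuousOn_const
  refine orthogonal_eq_bot_of_eigenfunctions_mem D.lt.le hQ hu hv hW fun μ g g' hg ha hb => ?_
  rw [wronskian, hu0, hu1] at ha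
  rw [wronskian, hv0, hv1] at hb
  by_cases hz : ∃ x ∈ Icc a b, g x ≠ 0
  · have hg' : IsSolution a b (fun x => q x - (lam 0 - 1 + μ)) g g' := by
      simpa only [sub_sub] using hg
    obtain ⟨n, hn⟩ := D.complete _ g g' hg' (by linarith) (by linarith) hz
    rw [← hn] at hg'
    rw [toL2_eq_smul hg.continuousOn (D.continuousOn n) (D.eqOn_smul hg' (by linarith))]
    exact Submodule.smul_mem _ _ (Submodule.subset_span ⟨n, rfl⟩)
  · push Not at hz
    have hzero : EqOn g ((0 : ℝ) • g) (Icc a b) := fun x hx => by simp [hz x hx]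
    rw [toL2_eq_smul hg.continuousOn hg.continuousOn hzero, zero_smul]
    exact Submodule.zero_mem _

theorem hasSum_integral_mul_integral (D : IsRobinEigensystem a b q h β lam y y') {x t : ℝ}
    (hx : a ≤ x) (hxt : x ≤ t) (ht : t ≤ b) :
    HasSum (fun n => (∫ u in a..x, y n u) * ∫ u in a..t, y n u) (x - a) := by
  let B := HilbertBasis.mkOfOrthogonalEqBot D.orthonormal D.orthogonal_span_eq_bot
  have hB : ∀ n, B n = toL2 (D.continuousOn n) :=
    congrFun (HilbertBasis.coe_mkOfOrthogonalEqBot _ _)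
  have hxb : x ∈ Icc a b := ⟨hx, hxt.trans ht⟩
  have htb : t ∈ Icc a b := ⟨hx.trans hxt, ht⟩
  have hsum := B.hasSum_inner_mul_inner (indicatorL2 hxb) (indicatorL2 htb)
  rw [inner_indicatorL2_indicatorL2 hxb htb hxt] at hsum
  refine hsum.congr_fun fun n => ?_
  rw [real_inner_comm (indicatorL2 htb), hB, inner_indicatorL2_toL2, inner_indicatorL2_toL2]

end IsRobinEigensystem

/-! ### Asymptotics of solutions at high frequency -/

section Asymptotics

open Complex (I)

variable {a b h s : ℝ} {q u u' : ℝ → ℝ}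

/-- The complex amplitude of a solution of `u'' = (q - s²) u`: the phase is chosen so that it is
constant when `q = 0`. -/
noncomputable def amplitude (a s : ℝ) (u u' : ℝ → ℝ) (x : ℝ) : ℂ :=
  (u x + u' x / s * I) * Complex.exp ((s * (x - a) : ℝ) * I)

theorem norm_amplitude (x : ℝ) : ‖amplitude a s u u' x‖ = ‖(u x + u' x / s * I : ℂ)‖ := by
  rw [amplitude, norm_mul, Complex.norm_exp_ofReal_mul_I, mul_one]

theorem hasDerivWithinAt_amplitude (hu : IsSolution a b (fun x => q x - s ^ 2) u u') (hs : s ≠ 0)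
    {x : ℝ} (hx : x ∈ Icc a b) :
    HasDerivWithinAt (amplitude a s u u')
      (q x * u x / s * I * Complex.exp ((s * (x - a) : ℝ) * I)) (Icc a b) x := by
  have hphase : HasDerivAt (fun x : ℝ => ((s * (x - a) : ℝ) : ℂ) * I) (s * I) x := by
    simpa using ((((hasDerivAt_id x).sub_const a).const_mul s).ofReal_comp).mul_const I
  have hsC : (s : ℂ) ≠ 0 := Complex.ofReal_ne_zero.2 hs
  refine (((hu.hasDerivWithinAt x hx).ofReal_comp.add
    (((hu.hasDerivWithinAt_deriv x hx).ofReal_comp.div_const (s : ℂ)).mul_const I)).mul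
      hphase.cexp.hasDerivWithinAt).congr_deriv ?_
  simp only [Pi.add_apply]
  push_cast
  field_simp
  linear_combination s * u' x * Complex.I_sq

theorem norm_deriv_amplitude_le {K : ℝ} (hs : 0 < s) {x : ℝ} (hqK : |q x| ≤ K) :
    ‖(q x * u x / s * I * Complex.exp ((s * (x - a) : ℝ) * I) : ℂ)‖
      ≤ K / s * ‖amplitude a s u u' x‖ := by
  have hre : |u x| ≤ ‖(u x + u' x / s * I : ℂ)‖ := by
    simpa [← Complex.ofReal_div] using Complex.abs_re_le_norm (u x + u' x / s * I)
  rw [norm_amplitude, norm_mul, Complex.norm_exp_ofReal_mul_I, mul_one, norm_mul, Complex.norm_I,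
    mul_one, norm_div, norm_mul, Complex.norm_real, Complex.norm_real, Complex.norm_real,
    Real.norm_of_nonneg hs.le, div_mul_eq_mul_div]
  gcongr
  · exact (abs_nonneg _).trans hqK
  · exact hqK
  · exact hre

theorem norm_amplitude_le {K : ℝ} (hK : 0 ≤ K) (hqK : ∀ x ∈ Icc a b, |q x| ≤ K)
    (hu : IsSolution a b (fun x => q x - s ^ 2) u u') (hs : 1 ≤ s) {x : ℝ} (hx : x ∈ Icc a b) :
    ‖amplitude a s u u' x‖ ≤ ‖amplitude a s u u' a‖ * Real.exp (K * (b - a)) := by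
  have hs0 : 0 < s := one_pos.trans_le hs
  have hgron := norm_le_gronwallBound_of_hasDerivWithinAt_Icc (K := K) (ε := 0)
    (fun x hx => hasDerivWithinAt_amplitude hu hs0.ne' hx)
    (fun x hx => (norm_deriv_amplitude_le hs0 (hqK x hx)).trans (by
      rw [add_zero]; gcongr; exact div_le_self hK hs)) hx
  rw [gronwallBound_ε0] at hgron
  refine hgron.trans ?_
  gcongr
  exact hx.2

theorem norm_sub_exp_eq (x : ℝ) :
    ‖(u x + u' x / s * I : ℂ) - Complex.exp ((-(s * (x - a)) : ℝ) * I)‖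
      = ‖amplitude a s u u' x - 1‖ := by
  have h : (u x + u' x / s * I : ℂ) - Complex.exp ((-(s * (x - a)) : ℝ) * I)
      = (amplitude a s u u' x - 1) * Complex.exp ((-(s * (x - a)) : ℝ) * I) := by
    rw [amplitude, sub_mul, mul_assoc, ← Complex.exp_add]
    simp
  rw [h, norm_mul, Complex.norm_exp_ofReal_mul_I, mul_one]

theorem exists_norm_sub_exp_le (hq : ContinuousOn q (Icc a b)) (h : ℝ) :
    ∃ C, ∀ s ≥ 1, ∀ u u' : ℝ → ℝ, IsSolution a b (fun x => q x - s ^ 2) u u' → u a = 1 → u' a = h →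
      ∀ x ∈ Icc a b,
        ‖(u x + u' x / s * I : ℂ) - Complex.exp ((-(s * (x - a)) : ℝ) * I)‖ ≤ C / s := by
  obtain ⟨K, hK, hqK⟩ := exists_one_le_abs_le_of_continuousOn_Icc hq
  refine ⟨|h| + K * ((1 + |h|) * Real.exp (K * (b - a))) * (b - a),
    fun s hs u u' hu h0 h1 x hx => ?_⟩
  have hs0 : 0 < s := one_pos.trans_le hs
  have ha : amplitude a s u u' a - 1 = h / s * I := by simp [amplitude, h0, h1]
  have hh : ‖(h / s * I : ℂ)‖ = |h| / s := by simp [abs_of_pos hs0]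
  have ha_le : ‖amplitude a s u u' a‖ ≤ 1 + |h| := by
    rw [eq_add_of_sub_eq' ha]
    refine (norm_add_le _ _).trans ?_
    rw [hh, norm_one]
    gcongr
    exact div_le_self (abs_nonneg h) hs
  have hbound : ∀ x ∈ Icc a b, ‖amplitude a s u u' x‖ ≤ (1 + |h|) * Real.exp (K * (b - a)) :=
    fun x hx => (norm_amplitude_le (by linarith) hqK hu hs hx).trans (by gcongr)
  have hdiff := norm_sub_le_of_hasDerivWithinAt_Icc
    (fun x hx => hasDerivWithinAt_amplitude hu hs0.ne' hx)
    (fun x hx => (norm_deriv_amplitude_le hs0 (hqK x hx)).trans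
      (mul_le_mul_of_nonneg_left (hbound x hx) (by positivity))) hx
  calc ‖(u x + u' x / s * I : ℂ) - Complex.exp ((-(s * (x - a)) : ℝ) * I)‖
      = ‖(amplitude a s u u' a - 1) + (amplitude a s u u' x - amplitude a s u u' a)‖ := by
        rw [norm_sub_exp_eq]
        congr 1
        ring
    _ ≤ |h| / s + K / s * ((1 + |h|) * Real.exp (K * (b - a))) * (b - a) :=
        (norm_add_le _ _).trans (add_le_add (by rw [ha, hh]) hdiff)
    _ = _ := by ring

theorem abs_sub_cos_le_and_abs_add_sin_le {C x : ℝ} (hs : 0 < s)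
    (h : ‖(u x + u' x / s * I : ℂ) - Complex.exp ((-(s * (x - a)) : ℝ) * I)‖ ≤ C / s) :
    |u x - Real.cos (s * (x - a))| ≤ C / s ∧ |u' x + s * Real.sin (s * (x - a))| ≤ C := by
  rw [Complex.exp_ofReal_mul_I, Real.cos_neg,
    Real.sin_neg, ← Complex.ofReal_div] at h
  generalize Real.cos (s * (x - a)) = c, Real.sin (s * (x - a)) = d at h ⊢
  refine ⟨?_, ?_⟩
  · simpa using (Complex.abs_re_le_norm _).trans h
  · have him : |u' x / s + d| ≤ C / s := by
      simpa using (Complex.abs_im_le_norm _).trans h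
    rwa [← mul_le_mul_iff_of_pos_right hs, div_mul_cancel₀ C hs.ne', ← abs_of_pos hs, ← abs_mul,
      abs_of_pos hs, add_mul, div_mul_cancel₀ _ hs.ne', mul_comm d] at him

/-- The function `u` agrees with `cos (s (x - a))` up to `C / s`, and its primitive agrees with
`sin (s (x - a)) / s` up to `C / s²`. -/
structure CosineApprox (a b C s : ℝ) (u : ℝ → ℝ) : Prop where
  abs_sub_cos_le : ∀ x ∈ Icc a b, |u x - Real.cos (s * (x - a))| ≤ C / s
  abs_integral_sub_sin_le :
    ∀ x ∈ Icc a b, |(∫ t in a..x, u t) - Real.sin (s * (x - a)) / s| ≤ C / s ^ 2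

theorem sq_mul_integral_eq (hq : ContinuousOn q (Icc a b))
    (hu : IsSolution a b (fun x => q x - s ^ 2) u u') {x : ℝ} (hx : x ∈ Icc a b) :
    s ^ 2 * ∫ t in a..x, u t = (∫ t in a..x, q t * u t) - (u' x - u' a) := by
  have ha : a ∈ Icc a b := left_mem_Icc.2 (hx.1.trans hx.2)
  have hqu : ContinuousOn (fun t => q t * u t) (Icc a b) := hq.mul hu.continuousOn
  have hcont : ContinuousOn (fun t => (q t - s ^ 2) * u t) (Icc a b) :=
    (hq.sub continuousOn_const).mul hu.continuousOn
  rw [← integral_eq_sub_of_hasDerivWithinAt_Icc hcont hu.hasDerivWithinAt_deriv ha hx,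
    ← intervalIntegral.integral_sub
      (intervalIntegrable_of_continuousOn_Icc hqu ha hx)
      (intervalIntegrable_of_continuousOn_Icc hcont ha hx),
    ← intervalIntegral.integral_const_mul]
  exact intervalIntegral.integral_congr fun t _ => by ring

theorem abs_integral_mul_le {K M x : ℝ} (hqK : ∀ t ∈ Icc a b, |q t| ≤ K)
    (huM : ∀ t ∈ Icc a b, |u t| ≤ M) (hx : x ∈ Icc a b) :
    |∫ t in a..x, q t * u t| ≤ K * M * |b - a| := by
  have hK : 0 ≤ K := (abs_nonneg _).trans (hqK x hx)
  have hM : 0 ≤ M := (abs_nonneg _).trans (huM x hx)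
  have hle : ∀ t ∈ uIoc a x, ‖q t * u t‖ ≤ K * M := fun t ht => by
    have htI : t ∈ Icc a b := uIcc_subset_Icc (left_mem_Icc.2 (hx.1.trans hx.2)) hx
      (uIoc_subset_uIcc ht)
    rw [norm_mul]
    exact mul_le_mul (hqK t htI) (huM t htI) (norm_nonneg _) hK
  exact (intervalIntegral.norm_integral_le_of_norm_le_const hle).trans (mul_le_mul_of_nonneg_left
    (abs_le_abs_of_nonneg (sub_nonneg.2 hx.1) (sub_le_sub_right hx.2 a)) (by positivity))

theorem exists_cosineApprox (hq : ContinuousOn q (Icc a b)) (h : ℝ) :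
    ∃ C, ∀ s ≥ 1, ∀ u u' : ℝ → ℝ, IsSolution a b (fun x => q x - s ^ 2) u u' → u a = 1 → u' a = h →
      CosineApprox a b C s u ∧ ∀ x ∈ Icc a b, |u' x + s * Real.sin (s * (x - a))| ≤ C := by
  obtain ⟨K, hK, hqK⟩ := exists_one_le_abs_le_of_continuousOn_Icc hq
  obtain ⟨C, hC⟩ := exists_norm_sub_exp_le hq h
  refine ⟨K * (1 + |C|) * |b - a| + |h| + |C|, fun s hs u u' hu h0 h1 => ?_⟩
  have hs0 : 0 < s := one_pos.trans_le hs
  have hC_le : C ≤ K * (1 + |C|) * |b - a| + |h| + |C| := by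
    have := le_abs_self C
    have : 0 ≤ K * (1 + |C|) * |b - a| := by positivity
    linarith [abs_nonneg h]
  have hsol := fun x hx => abs_sub_cos_le_and_abs_add_sin_le hs0 (hC s hs u u' hu h0 h1 x hx)
  have hu_le : ∀ x ∈ Icc a b, |u x| ≤ 1 + |C| := fun x hx => by
    have h1 := abs_sub_abs_le_abs_sub (u x) (Real.cos (s * (x - a)))
    have h2 : C / s ≤ |C| :=
      (div_le_div_of_nonneg_right (le_abs_self C) hs0.le).trans (div_le_self (abs_nonneg C) hs)
    linarith [(hsol x hx).1, Real.abs_cos_le_one (s * (x - a))]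
  refine ⟨⟨fun x hx => (hsol x hx).1.trans (by gcongr), fun x hx => ?_⟩,
    fun x hx => (hsol x hx).2.trans hC_le⟩
  have hint := abs_integral_mul_le hqK hu_le hx
  have hscaled : (∫ t in a..x, u t) - Real.sin (s * (x - a)) / s
      = ((∫ t in a..x, q t * u t) + h - (u' x + s * Real.sin (s * (x - a)))) / s ^ 2 := by
    have := sq_mul_integral_eq hq hu hx
    rw [h1] at this
    field_simp
    linear_combination this
  rw [hscaled, abs_div, abs_of_pos (pow_pos hs0 2)]
  gcongr
  refine (abs_sub _ _).trans (add_le_add ((abs_add_le _ _).trans (by gcongr)) ?_)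
  exact (hsol x hx).2.trans (le_abs_self C)

end Asymptotics

section CosineApprox

variable {a b C s σ : ℝ} {u w : ℝ → ℝ}

theorem abs_sin_div_sub_sin_div_le (hs : 0 < s) (hσ : 1 ≤ σ) (t : ℝ) :
    |Real.sin (s * t) / s - Real.sin (σ * t) / σ| ≤ |s - σ| * (|t| + 1) / s := by
  have hσ0 : 0 < σ := one_pos.trans_le hσ
  have hdecomp : Real.sin (s * t) / s - Real.sin (σ * t) / σ
      = ((Real.sin (s * t) - Real.sin (σ * t)) + Real.sin (σ * t) / σ * (σ - s)) / s := by
    field_simp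
    ring
  have h1 : |Real.sin (s * t) - Real.sin (σ * t)| ≤ |s - σ| * |t| := by
    rw [← abs_mul, sub_mul]
    exact Real.abs_sin_sub_sin_le _ _
  have h2 : |Real.sin (σ * t) / σ| ≤ 1 := by
    rw [abs_div, abs_of_pos hσ0]
    exact div_le_one_of_le₀ ((Real.abs_sin_le_one _).trans hσ) hσ0.le
  rw [hdecomp, abs_div, abs_of_pos hs, mul_add, mul_one]
  gcongr
  refine (abs_add_le _ _).trans (add_le_add h1 ?_)
  rw [abs_mul, abs_sub_comm]
  exact mul_le_of_le_one_left (abs_nonneg _) h2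

theorem integral_cos_sq_mul_sub (hσ : σ ≠ 0) :
    ∫ x in a..b, Real.cos (σ * (x - a)) ^ 2
      = (b - a) / 2 + Real.sin (2 * (σ * (b - a))) / (4 * σ) := by
  have hsubst := intervalIntegral.integral_comp_mul_sub (fun x => Real.cos x ^ 2) hσ (σ * a)
    (a := a) (b := b)
  simp only [← mul_sub, smul_eq_mul] at hsubst
  rw [hsubst, integral_cos_sq, Real.sin_two_mul, sub_self, mul_zero, Real.sin_zero]
  field_simp
  ring

namespace CosineApprox

theorem nonneg (hu : CosineApprox a b C s u) (hab : a ≤ b) (hs : 0 < s) : 0 ≤ C := by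
  have h := (abs_nonneg _).trans (hu.abs_sub_cos_le a (left_mem_Icc.2 hab))
  simpa using (le_div_iff₀ hs).1 h

theorem abs_le (hu : CosineApprox a b C s u) (hs : 1 ≤ s) {x : ℝ} (hx : x ∈ Icc a b) :
    |u x| ≤ 1 + C := by
  have h := hu.abs_sub_cos_le x hx
  have hC := hu.nonneg (hx.1.trans hx.2) (one_pos.trans_le hs)
  linarith [div_le_self hC hs, abs_sub_abs_le_abs_sub (u x) (Real.cos (s * (x - a))),
    Real.abs_cos_le_one (s * (x - a))]

theorem abs_integral_le (hu : CosineApprox a b C s u) (hs : 1 ≤ s) {x : ℝ} (hx : x ∈ Icc a b) :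
    |∫ t in a..x, u t| ≤ (1 + C) / s := by
  have h := hu.abs_integral_sub_sin_le x hx
  have hs0 := one_pos.trans_le hs
  have hC := hu.nonneg (hx.1.trans hx.2) hs0
  have hsin : |Real.sin (s * (x - a)) / s| ≤ 1 / s := by
    rw [abs_div, abs_of_pos hs0]
    gcongr
    exact Real.abs_sin_le_one _
  have hC_le : C / s ^ 2 ≤ C / s := by
    gcongr
    exact le_self_pow₀ hs two_ne_zero
  rw [add_div]
  linarith [abs_sub_abs_le_abs_sub (∫ t in a..x, u t) (Real.sin (s * (x - a)) / s)]

theorem of_abs_sub_le (hu : CosineApprox a b C s u) (hs : 0 < s) (hσ : 1 ≤ σ) (hσs : σ ≤ 2 * s)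
    {D : ℝ} (hD : |s - σ| ≤ D / σ) (hab : a ≤ b) :
    CosineApprox a b (4 * C + 2 * D * (b - a + 1)) σ u := by
  have hσ0 : 0 < σ := one_pos.trans_le hσ
  have hC := hu.nonneg hab hs
  have hD0 : 0 ≤ D := by simpa using (le_div_iff₀ hσ0).1 ((abs_nonneg _).trans hD)
  have hinv : 1 / s ≤ 2 / σ := by rwa [div_le_div_iff₀ hs hσ0, one_mul]
  refine ⟨fun x hx => ?_, fun x hx => ?_⟩
  · have hcos : |Real.cos (s * (x - a)) - Real.cos (σ * (x - a))| ≤ D / σ * (b - a) := by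
      refine (Real.abs_cos_sub_cos_le _ _).trans ?_
      rw [← sub_mul, abs_mul, abs_of_nonneg (sub_nonneg.2 hx.1)]
      gcongr
      · linarith [hx.1]
      · exact hx.2
    have hmain : C / s ≤ C * (2 / σ) := by
      rw [div_eq_mul_one_div]
      gcongr
    calc |u x - Real.cos (σ * (x - a))| ≤ C * (2 / σ) + D / σ * (b - a) :=
          (abs_sub_le _ _ _).trans (add_le_add ((hu.abs_sub_cos_le x hx).trans hmain) hcos)
      _ = (2 * C + D * (b - a)) / σ := by ring
      _ ≤ (4 * C + 2 * D * (b - a + 1)) / σ := by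
          refine div_le_div_of_nonneg_right ?_ hσ0.le
          nlinarith [mul_nonneg hD0 (sub_nonneg.2 hab)]
  · have hsin : |Real.sin (s * (x - a)) / s - Real.sin (σ * (x - a)) / σ|
        ≤ D / σ * (b - a + 1) * (2 / σ) := by
      refine (abs_sin_div_sub_sin_div_le hs hσ _).trans ?_
      rw [abs_of_nonneg (sub_nonneg.2 hx.1), div_eq_mul_one_div]
      gcongr
      · linarith [hx.1]
      · exact hx.2
    have hmain : C / s ^ 2 ≤ C * (2 / σ) ^ 2 := by
      rw [div_eq_mul_one_div, ← one_div_pow]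
      gcongr
    calc |(∫ t in a..x, u t) - Real.sin (σ * (x - a)) / σ|
        ≤ C * (2 / σ) ^ 2 + D / σ * (b - a + 1) * (2 / σ) :=
          (abs_sub_le _ _ _).trans
            (add_le_add ((hu.abs_integral_sub_sin_le x hx).trans hmain) hsin)
      _ = (4 * C + 2 * D * (b - a + 1)) / σ ^ 2 := by ring

theorem abs_mul_sub_cos_sq_le (hu : CosineApprox a b C σ u) (hw : CosineApprox a b C σ w)
    (hσ : 1 ≤ σ) {x : ℝ} (hx : x ∈ Icc a b) :
    |u x * w x - Real.cos (σ * (x - a)) ^ 2| ≤ (2 + C) * C / σ := by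
  have hσ0 : 0 < σ := one_pos.trans_le hσ
  have hC := hu.nonneg (hx.1.trans hx.2) hσ0
  calc |u x * w x - Real.cos (σ * (x - a)) ^ 2|
      = |(u x - Real.cos (σ * (x - a))) * w x
          + Real.cos (σ * (x - a)) * (w x - Real.cos (σ * (x - a)))| := by ring_nf
    _ ≤ C / σ * (1 + C) + 1 * (C / σ) := by
        refine (abs_add_le _ _).trans ?_
        rw [abs_mul, abs_mul]
        gcongr
        exacts [hu.abs_sub_cos_le x hx, hw.abs_le hσ hx, Real.abs_cos_le_one _,
          hw.abs_sub_cos_le x hx]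
    _ = (2 + C) * C / σ := by ring

theorem abs_integral_mul_sub_half_le (hu : CosineApprox a b C σ u) (hw : CosineApprox a b C σ w)
    (hab : a ≤ b) (hσ : 1 ≤ σ) (hu_cont : ContinuousOn u (Icc a b))
    (hw_cont : ContinuousOn w (Icc a b)) :
    |(∫ x in a..b, u x * w x) - (b - a) / 2| ≤ ((2 + C) * C * (b - a) + 1) / σ := by
  have hσ0 : 0 < σ := one_pos.trans_le hσ
  have hprod : IntervalIntegrable (fun x => u x * w x) volume a b :=
    (hu_cont.mul hw_cont).intervalIntegrable_of_Icc hab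
  have hcos : IntervalIntegrable (fun x => Real.cos (σ * (x - a)) ^ 2) volume a b :=
    Continuous.intervalIntegrable (by fun_prop) a b
  have hdiff : |(∫ x in a..b, u x * w x) - ∫ x in a..b, Real.cos (σ * (x - a)) ^ 2|
      ≤ (2 + C) * C / σ * (b - a) := by
    have hpointwise : ∀ x ∈ uIoc a b, ‖u x * w x - Real.cos (σ * (x - a)) ^ 2‖
        ≤ (2 + C) * C / σ := by
      rw [uIoc_of_le hab]
      exact fun x hx => hu.abs_mul_sub_cos_sq_le hw hσ (Ioc_subset_Icc_self hx)
    rw [← intervalIntegral.integral_sub hprod hcos]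
    simpa only [Real.norm_eq_abs, abs_of_nonneg (sub_nonneg.2 hab)]
      using intervalIntegral.norm_integral_le_of_norm_le_const hpointwise
  have hhalf : |(∫ x in a..b, Real.cos (σ * (x - a)) ^ 2) - (b - a) / 2| ≤ 1 / σ := by
    rw [integral_cos_sq_mul_sub hσ0.ne', add_sub_cancel_left, abs_div,
      abs_of_pos (by positivity : 0 < 4 * σ)]
    gcongr
    · exact Real.abs_sin_le_one _
    · linarith
  calc |(∫ x in a..b, u x * w x) - (b - a) / 2| ≤ (2 + C) * C / σ * (b - a) + 1 / σ :=
        (abs_sub_le _ _ _).trans (add_le_add hdiff hhalf)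
    _ = ((2 + C) * C * (b - a) + 1) / σ := by ring

theorem abs_mul_integral_sub_le (hu : CosineApprox a b C σ u) (hσ : 1 ≤ σ) {p p₀ P : ℝ}
    (hp₀ : 0 ≤ p₀) (hp : |p - p₀| ≤ P / σ) {x t : ℝ} (hx : x ∈ Icc a b) (ht : t ∈ Icc a b) :
    |p * (u x * ∫ r in a..t, u r)
        - p₀ * (Real.cos (σ * (x - a)) * (Real.sin (σ * (t - a)) / σ))|
      ≤ (P * (1 + C) ^ 2 + p₀ * C * (2 + C)) / σ ^ 2 := by
  have hσ0 : 0 < σ := one_pos.trans_le hσ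
  have hC := hu.nonneg (hx.1.trans hx.2) hσ0
  set c := Real.cos (σ * (x - a))
  set S := Real.sin (σ * (t - a)) / σ
  set I := ∫ r in a..t, u r
  calc |p * (u x * I) - p₀ * (c * S)|
      = |(p - p₀) * (u x * I) + p₀ * ((u x - c) * I) + p₀ * (c * (I - S))| := by ring_nf
    _ ≤ P / σ * ((1 + C) * ((1 + C) / σ)) + p₀ * (C / σ * ((1 + C) / σ))
          + p₀ * (1 * (C / σ ^ 2)) := by
        refine (abs_add_three _ _ _).trans ?_
        simp only [abs_mul, abs_of_nonneg hp₀]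
        gcongr
        exacts [(abs_nonneg _).trans hp, hu.abs_le hσ hx, hu.abs_integral_le hσ ht,
          hu.abs_sub_cos_le x hx, hu.abs_integral_le hσ ht, Real.abs_cos_le_one _,
          hu.abs_integral_sub_sin_le t ht]
    _ = (P * (1 + C) ^ 2 + p₀ * C * (2 + C)) / σ ^ 2 := by ring

end CosineApprox

theorem abs_sub_two_div_le {L p I ε : ℝ} (hL : 0 < L) (hpI : p * I = 1) (hI : |I - L / 2| ≤ ε)
    (hε : ε ≤ L / 4) : |p - 2 / L| ≤ 8 / L ^ 2 * ε := by
  have hI_ge : L / 4 ≤ I := by linarith [neg_abs_le (I - L / 2)]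
  have hp : p = 1 / I := eq_one_div_of_mul_eq_one_left hpI
  have hp_le : |p| ≤ 4 / L := by
    rw [hp, abs_of_pos (one_div_pos.2 (by linarith)), div_le_div_iff₀ (by linarith) hL]
    linarith
  have hfactor : p - 2 / L = -(p * (2 / L) * (I - L / 2)) := by
    field_simp
    linear_combination 2 * hpI
  rw [hfactor, abs_neg, abs_mul, abs_mul, abs_of_pos (by positivity : 0 < 2 / L)]
  calc |p| * (2 / L) * |I - L / 2| ≤ 4 / L * (2 / L) * ε := by gcongr
    _ = 8 / L ^ 2 * ε := by ring

end CosineApprox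

/-! ### Location of the eigenvalues -/

section Counting

theorem abs_sub_round_mul_pi_le (t : ℝ) :
    |t - round (t / Real.pi) * Real.pi| ≤ Real.pi / 2 * |Real.sin t| := by
  have hpi := Real.pi_pos
  have hround : |t - round (t / Real.pi) * Real.pi| ≤ Real.pi / 2 := by
    have hfactor : t - round (t / Real.pi) * Real.pi
        = (t / Real.pi - round (t / Real.pi)) * Real.pi := by
      field_simp
    rw [hfactor, abs_mul, abs_of_pos hpi]
    linarith [mul_le_mul_of_nonneg_right (abs_sub_round (t / Real.pi)) hpi.le]
  have hsin := Real.mul_abs_le_abs_sin hround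
  rw [Real.sin_sub_int_mul_pi, abs_mul, abs_zpow, abs_neg, abs_one, one_zpow, one_mul] at hsin
  rw [div_mul_eq_mul_div, div_le_iff₀ hpi] at hsin
  linarith

theorem abs_sub_round_mul_pi_add_div_le {s L φ ε : ℝ} (hL : 0 < L)
    (h : |Real.sin (s * L - φ)| ≤ ε) :
    |s - (round ((s * L - φ) / Real.pi) * Real.pi + φ) / L| ≤ Real.pi / 2 * ε / L := by
  have hround := (abs_sub_round_mul_pi_le (s * L - φ)).trans
    (mul_le_mul_of_nonneg_left h (by positivity))
  set m := round ((s * L - φ) / Real.pi)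
  have hfactor : s - (m * Real.pi + φ) / L = (s * L - φ - m * Real.pi) / L := by
    field_simp
    ring
  rw [hfactor, abs_div, abs_of_pos hL]
  gcongr

theorem abs_neg_one_zpow_mul_sub_sin_le {x r ε : ℝ} (M : ℤ)
    (h : |x - Real.sin (r + M * Real.pi)| ≤ ε) : |(-1) ^ M * x - Real.sin r| ≤ ε := by
  have he : |(-1 : ℝ) ^ M| = 1 := by rw [abs_zpow, abs_neg, abs_one, one_zpow]
  have hee : (-1 : ℝ) ^ M * (-1) ^ M = 1 := by rw [← abs_mul_abs_self, he, one_mul]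
  calc |(-1) ^ M * x - Real.sin r| = |(-1) ^ M * (x - (-1) ^ M * Real.sin r)| := by
        rw [mul_sub, ← mul_assoc, hee, one_mul]
    _ ≤ ε := by rwa [abs_mul, he, one_mul, ← Real.sin_add_int_mul_pi]

/-- The intermediate value theorem between the points where `sin (s * L - φ) = ±1`. -/
theorem exists_zero_round_eq {F : ℝ → ℝ} {L φ C : ℝ} (hL : 0 < L) (hF : ContinuousOn F (Ici 1))
    (hsin : ∀ s ≥ 1, |F s - Real.sin (s * L - φ)| ≤ C / s) :
    ∃ M₀ : ℤ, ∀ M ≥ M₀, ∃ s ≥ 1, F s = 0 ∧ round ((s * L - φ) / Real.pi) = M := by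
  have hpi := Real.pi_pos
  obtain ⟨M₀, hM₀⟩ := exists_int_gt (((1 + |C|) * L + Real.pi / 2 - φ) / Real.pi)
  refine ⟨M₀, fun M hM => ?_⟩
  have hM_lt : (1 + |C|) * L + Real.pi / 2 - φ < M * Real.pi :=
    (div_lt_iff₀ hpi).1 (hM₀.trans_le (mod_cast hM))
  set p : ℝ → ℝ := fun r => (r + M * Real.pi + φ) / L with hp
  have hp_gt : ∀ r, -(Real.pi / 2) ≤ r → 1 + |C| < p r := fun r hr =>
    (lt_div_iff₀ hL).2 (by linarith)
  have hp_sub : ∀ r, p r * L - φ = r + M * Real.pi := fun r => by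
    simp only [hp]; field_simp; ring
  have hnear : ∀ r, -(Real.pi / 2) ≤ r → |(-1) ^ M * F (p r) - Real.sin r| < 1 := by
    intro r hr
    have hgt := hp_gt r hr
    have hpos : 0 < p r := by linarith [abs_nonneg C]
    have hle := hsin (p r) (by linarith [abs_nonneg C])
    rw [hp_sub] at hle
    exact (abs_neg_one_zpow_mul_sub_sin_le M hle).trans_lt
      ((div_lt_one hpos).2 (by linarith [le_abs_self C]))
  have hleft := hnear (-(Real.pi / 2)) le_rfl
  have hright := hnear (Real.pi / 2) (by linarith)
  rw [Real.sin_neg, Real.sin_pi_div_two, abs_lt] at hleft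
  rw [Real.sin_pi_div_two, abs_lt] at hright
  have hone : ∀ s, p (-(Real.pi / 2)) ≤ s → 1 ≤ s := fun s hs => by
    linarith [hp_gt _ le_rfl, abs_nonneg C]
  have hcont : ContinuousOn (fun s => (-1) ^ M * F s)
      (Icc (p (-(Real.pi / 2))) (p (Real.pi / 2))) :=
    continuousOn_const.mul (hF.mono fun s hs => hone s hs.1)
  have hzero : (0 : ℝ) ∈
      Ioo ((-1) ^ M * F (p (-(Real.pi / 2)))) ((-1) ^ M * F (p (Real.pi / 2))) :=
    ⟨by linarith, by linarith⟩
  obtain ⟨s, ⟨hs_left, hs_right⟩, hs0⟩ := intermediate_value_Ioo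
    (by simp only [hp]; gcongr; linarith) hcont hzero
  refine ⟨s, hone s hs_left.le, (mul_eq_zero.1 hs0).resolve_left (zpow_ne_zero _ (by norm_num)),
    round_eq_iff.2 ⟨(le_div_iff₀ hpi).2 ?_, (div_lt_iff₀ hpi).2 ?_⟩⟩
  · linarith [hp_sub (-(Real.pi / 2)), mul_lt_mul_of_pos_right hs_left hL]
  · linarith [hp_sub (Real.pi / 2), mul_lt_mul_of_pos_right hs_right hL]

theorem comparison_of_abs_sub_le_div {s σ P : ℝ} (hs : 2 ≤ s) (hP : P ≤ s)
    (h : |s - σ| ≤ P / s) : s - 1 ≤ σ ∧ σ ≤ 2 * s ∧ |s - σ| ≤ 2 * P / σ := by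
  have hs0 : 0 < s := two_pos.trans_le hs
  have hP0 : 0 ≤ P := by simpa using (le_div_iff₀ hs0).1 ((abs_nonneg _).trans h)
  have hclose := abs_le.1 (h.trans ((div_le_one hs0).2 hP))
  have hσs : σ ≤ 2 * s := by linarith [hclose.1]
  refine ⟨by linarith [hclose.2], hσs, h.trans ?_⟩
  rw [div_le_div_iff₀ hs0 (by linarith [hclose.2])]
  nlinarith

theorem exists_eq_add_of_monotone_of_injOn {m : ℕ → ℤ} {n₀ : ℕ} {M₀ : ℤ} (hm : Monotone m)
    (hinj : InjOn m (Ici n₀)) (hsurj : ∀ M ≥ M₀, ∃ n, m n = M) :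
    ∃ (N : ℕ) (k : ℤ), ∀ n ≥ N, m n = n + k := by
  obtain ⟨j, hj⟩ := hsurj M₀ le_rfl
  refine ⟨max n₀ j, m (max n₀ j) - max n₀ j, fun n hn => ?_⟩
  induction n, hn using Nat.le_induction with
  | base => ring
  | succ n hn ih =>
    have hlt : m n < m (n + 1) := (hm n.le_succ).lt_of_ne fun h => n.lt_succ_self.ne
      (hinj (le_of_max_le_left hn) ((le_of_max_le_left hn).trans n.le_succ) h)
    have hge : M₀ ≤ m n := hj ▸ hm (le_of_max_le_right hn)
    obtain ⟨i, hi⟩ := hsurj (m n + 1) (by linarith)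
    have hni : n < i := hm.reflect_lt (by linarith)
    have hle : m (n + 1) ≤ m n + 1 := hi ▸ hm hni
    rw [Nat.cast_succ]
    linarith

end Counting

section Shooting

variable {a b : ℝ} {Q R z z' w w' : ℝ → ℝ}

theorem IsSolution.norm_sub_le {K δ M : ℝ} (hz : IsSolution a b Q z z')
    (hw : IsSolution a b R w w') (h0 : z a = w a) (h1 : z' a = w' a) (hK : 1 ≤ K)
    (hQ : ∀ x ∈ Icc a b, |Q x| ≤ K) (hQR : ∀ x ∈ Icc a b, |Q x - R x| ≤ δ)
    (hM : ∀ x ∈ Icc a b, |w x| ≤ M) {x : ℝ} (hx : x ∈ Icc a b) :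
    ‖(z x - w x, z' x - w' x)‖ ≤ δ * M / K * (Real.exp (K * (x - a)) - 1) := by
  have h := norm_le_gronwallBound_of_hasDerivWithinAt_Icc (K := K) (ε := δ * M)
    (F := fun x => (z x - w x, z' x - w' x))
    (fun x hx => ((hz.hasDerivWithinAt x hx).sub (hw.hasDerivWithinAt x hx)).prodMk
      ((hz.hasDerivWithinAt_deriv x hx).sub (hw.hasDerivWithinAt_deriv x hx)))
    (fun x hx => ?_) hx
  · simpa [h0, h1, gronwallBound_of_K_ne_0 (zero_lt_one.trans_le hK).ne'] using h
  · have hsplit : ((z' x - w' x, Q x * z x - R x * w x) : ℝ × ℝ)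
        = (z' x - w' x, Q x * (z x - w x)) + (0, (Q x - R x) * w x) :=
      Prod.ext (by simp) (by simp only [Prod.snd_add]; ring)
    rw [hsplit]
    refine (norm_add_le _ _).trans (add_le_add
      (norm_mk_snd_mul_fst_le hK (hQ x hx) (z x - w x, z' x - w' x)) ?_)
    rw [Prod.norm_mk, norm_zero, max_eq_right (norm_nonneg _), norm_mul]
    exact mul_le_mul (hQR x hx) (hM x hx) (norm_nonneg _) ((abs_nonneg _).trans (hQR x hx))

theorem continuousOn_shooting {q : ℝ → ℝ} {U U' : ℝ → ℝ → ℝ} {h M : ℝ} {S : Set ℝ} (hab : a ≤ b)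
    (hq : ContinuousOn q (Icc a b))
    (hU : ∀ s, IsSolution a b (fun x => q x - s ^ 2) (U s) (U' s) ∧ U s a = 1 ∧ U' s a = h)
    (hM : ∀ s ∈ S, ∀ x ∈ Icc a b, |U s x| ≤ M) : ContinuousOn (fun s => (U s b, U' s b)) S := by
  intro s₀ _
  obtain ⟨K, hK, hqK⟩ := exists_one_le_abs_le_of_continuousOn_Icc
    (hq.sub (continuousOn_const (c := s₀ ^ 2)))
  have hbound : ∀ s ∈ S, ‖(U s₀ b, U' s₀ b) - (U s b, U' s b)‖
      ≤ |s ^ 2 - s₀ ^ 2| * M / K * (Real.exp (K * (b - a)) - 1) := fun s hs =>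
    (hU s₀).1.norm_sub_le (hU s).1 ((hU s₀).2.1.trans (hU s).2.1.symm)
      ((hU s₀).2.2.trans (hU s).2.2.symm) hK hqK
      (fun x _ => by rw [sub_sub_sub_cancel_left]) (hM s hs) (right_mem_Icc.2 hab)
  refine tendsto_iff_norm_sub_tendsto_zero.2 (squeeze_zero' (Eventually.of_forall fun _ =>
    norm_nonneg _) (eventually_mem_nhdsWithin.mono fun s hs => norm_sub_rev _ _ |>.trans_le
      (hbound s hs)) ?_)
  refine Tendsto.mono_left (Continuous.tendsto' (by fun_prop) _ _ (by simp)) nhdsWithin_le_nhds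

end Shooting

/-- Rescaled, the boundary condition at `b` is a phase-shifted sine to leading order; the phase
distinguishes the Dirichlet condition from all others. -/
theorem exists_rescaled_boundary {U U' : ℝ → ℝ} {L C : ℝ} (β : ℝ) (hU : ContinuousOn U (Ici 1))
    (hU' : ContinuousOn U' (Ici 1)) (hcos : ∀ s ≥ 1, |U s - Real.cos (s * L)| ≤ C / s)
    (hsin : ∀ s ≥ 1, |U' s + s * Real.sin (s * L)| ≤ C) :
    ∃ (F : ℝ → ℝ) (φ C' : ℝ), ContinuousOn F (Ici 1) ∧
      (∀ s ≥ 1, |F s - Real.sin (s * L - φ)| ≤ C' / s) ∧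
      ∀ s ≥ 1, F s = 0 ↔ U s * Real.cos β + U' s * Real.sin β = 0 := by
  by_cases hβ : Real.sin β = 0
  · have hcosβ : Real.cos β ≠ 0 := fun h => by simpa [hβ, h] using Real.sin_sq_add_cos_sq β
    refine ⟨fun s => -U s, Real.pi / 2, C, hU.neg, fun s hs => ?_, fun s _ => by simp [hβ, hcosβ]⟩
    rw [Real.sin_sub_pi_div_two, neg_sub_neg, abs_sub_comm]
    exact hcos s hs
  · have hne : ∀ s ∈ Ici (1 : ℝ), Real.sin β * s ≠ 0 := fun s hs =>
      mul_ne_zero hβ (one_pos.trans_le hs).ne'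
    refine ⟨fun s => -(U s * Real.cos β + U' s * Real.sin β) / (Real.sin β * s), 0,
      C + |Real.cos β / Real.sin β| * (1 + C), ((hU.mul continuousOn_const).add
        (hU'.mul continuousOn_const)).neg.div (by fun_prop) hne, fun s hs => ?_,
      fun s hs => by rw [div_eq_zero_iff, or_iff_left (hne s hs), neg_eq_zero]⟩
    have hs0 : 0 < s := one_pos.trans_le hs
    have hC : 0 ≤ C := (abs_nonneg _).trans (hsin s hs)
    have hU_le : |U s| ≤ 1 + C := by
      linarith [hcos s hs, abs_sub_abs_le_abs_sub (U s) (Real.cos (s * L)), div_le_self hC hs,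
        Real.abs_cos_le_one (s * L)]
    have hfactor : -(U s * Real.cos β + U' s * Real.sin β) / (Real.sin β * s)
          - Real.sin (s * L - 0)
        = -((U' s + s * Real.sin (s * L)) + Real.cos β / Real.sin β * U s) / s := by
      rw [sub_zero]
      field_simp
      ring
    rw [hfactor, abs_div, abs_neg, abs_of_pos hs0]
    gcongr
    refine (abs_add_le _ _).trans (add_le_add (hsin s hs) ?_)
    rw [abs_mul]
    gcongr

namespace IsRobinEigensystem

variable {a b : ℝ} {q : ℝ → ℝ} {h β : ℝ} {lam : ℕ → ℝ} {y y' : ℕ → ℝ → ℝ}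

theorem mk_eq_smul (D : IsRobinEigensystem a b q h β lam y y') {n : ℕ} {u u' : ℝ → ℝ}
    (hu : IsSolution a b (fun x => q x - lam n) u u') (hua : u a = 1) (hua' : u' a = h) {x : ℝ}
    (hx : x ∈ Icc a b) : (y n x, y' n x) = y n a • (u x, u' x) := by
  have hzero := ((D.isSolution n).linearCombination hu 1 (-y n a)).mk_eq_zero
    (D.continuousOn_potential.sub continuousOn_const) (by rw [hua]; ring)
    (by rw [hua', D.left]; ring) hx
  simp only [Prod.mk_eq_zero] at hzero
  exact Prod.ext (by simp only [Prod.smul_fst, smul_eq_mul]; linarith [hzero.1])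
    (by simp only [Prod.smul_snd, smul_eq_mul]; linarith [hzero.2])

theorem boundary_eq_zero_iff (D : IsRobinEigensystem a b q h β lam y y') {μ : ℝ} {u u' : ℝ → ℝ}
    (hu : IsSolution a b (fun x => q x - μ) u u') (hua : u a = 1) (hua' : u' a = h) :
    u b * Real.cos β + u' b * Real.sin β = 0 ↔ ∃ n, lam n = μ := by
  constructor
  · exact fun hub => D.complete μ u u' hu (by rw [hua, hua', mul_one]) hub
      ⟨a, left_mem_Icc.2 D.lt.le, hua ▸ one_ne_zero⟩
  · rintro ⟨n, rfl⟩
    have heq := Prod.mk.inj (D.mk_eq_smul hu hua hua' (right_mem_Icc.2 D.lt.le))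
    have hyb := D.right n
    rw [heq.1, heq.2, smul_eq_mul, smul_eq_mul, mul_assoc, mul_assoc, ← mul_add] at hyb
    exact (mul_eq_zero.1 hyb).resolve_left (D.ne_zero_left n)

theorem exists_characteristicFunction (D : IsRobinEigensystem a b q h β lam y y') :
    ∃ (F : ℝ → ℝ) (φ C : ℝ), ContinuousOn F (Ici 1) ∧
      (∀ s ≥ 1, |F s - Real.sin (s * (b - a) - φ)| ≤ C / s) ∧
      ∀ s ≥ 1, F s = 0 ↔ ∃ n, lam n = s ^ 2 := by
  have hb : b ∈ Icc a b := right_mem_Icc.2 D.lt.le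
  obtain ⟨C, hC⟩ := exists_cosineApprox D.continuousOn_potential h
  choose U U' hU using fun s : ℝ => exists_isSolution_left (Q := fun x => q x - s ^ 2) D.lt.le
    (D.continuousOn_potential.sub continuousOn_const) 1 h
  have happrox := fun s hs => hC s hs (U s) (U' s) (hU s).1 (hU s).2.1 (hU s).2.2
  have hcont := continuousOn_shooting (S := Ici 1) D.lt.le D.continuousOn_potential hU
    fun s hs x hx => (happrox s hs).1.abs_le hs hx
  obtain ⟨F, φ, C', hF, hsin, hzero⟩ := exists_rescaled_boundary β hcont.fst hcont.snd
    (fun s hs => (happrox s hs).1.abs_sub_cos_le b hb) (fun s hs => (happrox s hs).2 b hb)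
  exact ⟨F, φ, C', hF, hsin, fun s hs => (hzero s hs).trans
    (D.boundary_eq_zero_iff (hU s).1 (hU s).2.1 (hU s).2.2)⟩

/-- The index `m n` counts the half-oscillations of the `n`-th eigenfunction. -/
theorem exists_frequency_index (D : IsRobinEigensystem a b q h β lam y y') :
    ∃ (φ C : ℝ) (m : ℕ → ℤ), Monotone m ∧ (∃ M₀, ∀ M ≥ M₀, ∃ n, m n = M) ∧
      Tendsto (fun n => √(lam n)) atTop atTop ∧
      ∀ n, 1 ≤ lam n → |√(lam n) - (m n * Real.pi + φ) / (b - a)| ≤ C / √(lam n) := by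
  have hL : 0 < b - a := sub_pos.2 D.lt
  have hpi := Real.pi_pos
  obtain ⟨F, φ, C, hF, hsin, hzero⟩ := D.exists_characteristicFunction
  obtain ⟨M₀, hM₀⟩ := exists_zero_round_eq hL hF hsin
  have hsurj : ∀ M ≥ M₀, ∃ n, round ((√(lam n) * (b - a) - φ) / Real.pi) = M := by
    intro M hM
    obtain ⟨s, hs, hFs, hround⟩ := hM₀ M hM
    obtain ⟨n, hn⟩ := (hzero s hs).1 hFs
    exact ⟨n, by rwa [hn, Real.sqrt_sq (zero_le_one.trans hs)]⟩
  have hmono : Monotone fun n => √(lam n) := Real.sqrt_monotone.comp D.strictMono.monotone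
  refine ⟨φ, Real.pi / 2 * C / (b - a), fun n => round ((√(lam n) * (b - a) - φ) / Real.pi),
    fun i j hij => ?_, ⟨M₀, hsurj⟩, ?_, fun n hn => ?_⟩
  · simp only [round_eq]
    gcongr
    exact D.strictMono.monotone hij
  · refine tendsto_atTop_atTop_of_monotone hmono fun B => ?_
    obtain ⟨M, hM⟩ := exists_int_gt ((B * (b - a) - φ) / Real.pi + 1 / 2)
    obtain ⟨n, hn⟩ := hsurj (max M₀ M) (le_max_left _ _)
    refine ⟨n, le_of_mul_le_mul_right ?_ hL⟩
    have hM_le : (M : ℝ) ≤ (√(lam n) * (b - a) - φ) / Real.pi + 1 / 2 :=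
      le_trans (mod_cast hn ▸ le_max_right M₀ M) (round_le_add_half _)
    have hlt := hM.trans_le hM_le
    rw [add_lt_add_iff_right, div_lt_div_iff_of_pos_right hpi] at hlt
    linarith
  · have hs : 1 ≤ √(lam n) := Real.one_le_sqrt.2 hn
    have hsin_n := hsin _ hs
    rw [(hzero _ hs).2 ⟨n, (Real.sq_sqrt (zero_le_one.trans hn)).symm⟩, zero_sub, abs_neg]
      at hsin_n
    refine (abs_sub_round_mul_pi_add_div_le hL hsin_n).trans_eq ?_
    field_simp

theorem eventually_cosineApprox_index (D : IsRobinEigensystem a b q h β lam y y') :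
    ∃ (φ C : ℝ) (m : ℕ → ℤ), Monotone m ∧ (∃ M₀, ∀ M ≥ M₀, ∃ n, m n = M) ∧
      Tendsto (fun n => (m n * Real.pi + φ) / (b - a)) atTop atTop ∧
      ∀ᶠ n in atTop, CosineApprox a b C ((m n * Real.pi + φ) / (b - a)) fun x => y n x / y n a := by
  obtain ⟨φ, P, m, hm, hsurj, hlim, hfreq⟩ := D.exists_frequency_index
  obtain ⟨C, hC⟩ := exists_cosineApprox D.continuousOn_potential h
  have hlarge : ∀ᶠ n in atTop, 2 ≤ √(lam n) ∧ P ≤ √(lam n) :=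
    (hlim.eventually_ge_atTop 2).and (hlim.eventually_ge_atTop P)
  have hnear : ∀ᶠ n in atTop, √(lam n) - 1 ≤ (m n * Real.pi + φ) / (b - a) ∧
      (m n * Real.pi + φ) / (b - a) ≤ 2 * √(lam n) ∧
      |√(lam n) - (m n * Real.pi + φ) / (b - a)| ≤ 2 * P / ((m n * Real.pi + φ) / (b - a)) :=
    hlarge.mono fun n hn => comparison_of_abs_sub_le_div hn.1 hn.2
      (hfreq n (Real.one_le_sqrt.1 (by linarith)))
  refine ⟨φ, 4 * C + 2 * (2 * P) * (b - a + 1), m, hm, hsurj, ?_, ?_⟩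
  · exact tendsto_atTop_mono' atTop (hnear.mono fun n hn => hn.1)
      (tendsto_atTop_add_const_right _ _ hlim)
  · filter_upwards [hlarge, hnear] with n hn hσ
    have hone : 1 ≤ √(lam n) := by linarith
    have hsq : lam n = √(lam n) ^ 2 := (Real.sq_sqrt (Real.sqrt_pos.1 (by linarith)).le).symm
    have hsol : IsSolution a b (fun x => q x - √(lam n) ^ 2) (fun x => y n x / y n a)
        (fun x => y' n x / y n a) := by
      have := (D.isSolution n).linearCombination (D.isSolution n) (1 / y n a) 0
      rw [hsq] at this
      simpa [div_eq_inv_mul] using this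
    refine (hC _ hone _ _ hsol (div_self (D.ne_zero_left n)) ?_).1.of_abs_sub_le
      (by linarith) (by linarith) hσ.2.1 hσ.2.2 D.lt.le
    rw [D.left, mul_div_cancel_right₀ _ (D.ne_zero_left n)]

theorem eventually_cosineApprox (D : IsRobinEigensystem a b q h β lam y y') :
    ∃ c C : ℝ, ∀ᶠ n : ℕ in atTop,
      CosineApprox a b C (Real.pi / (b - a) * (c + n)) fun x => y n x / y n a := by
  obtain ⟨φ, C, m, hm, ⟨M₀, hsurj⟩, hlim, happrox⟩ := D.eventually_cosineApprox_index
  have hL : 0 < b - a := sub_pos.2 D.lt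
  have hcont : ∀ n, ContinuousOn (fun x => y n x / y n a) (Icc a b) := fun n =>
    (D.continuousOn n).div_const _
  obtain ⟨n₀, hn₀⟩ := eventually_atTop.1 (happrox.and ((hlim.eventually_ge_atTop 1).and
    (hlim.eventually_gt_atTop (((2 + C) * C * (b - a) + 1) / ((b - a) / 2)))))
  have hinj : InjOn m (Ici n₀) := by
    intro i hi j hj hij
    by_contra hne
    -- Two orthogonal functions would both be close to the same cosine.
    obtain ⟨hu, hone, hbig⟩ := hn₀ i hi
    obtain ⟨hw, -, -⟩ := hn₀ j hj
    rw [← hij] at hw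
    have hclose := hu.abs_integral_mul_sub_half_le hw D.lt.le hone (hcont i) (hcont j)
    simp only [div_mul_div_comm, intervalIntegral.integral_div, D.integral_mul_eq_zero hne,
      zero_div, zero_sub, abs_neg, abs_of_pos (half_pos hL)] at hclose
    exact hclose.not_gt ((div_lt_comm₀ (half_pos hL) (one_pos.trans_le hone)).1 hbig)
  obtain ⟨N, k, hk⟩ := exists_eq_add_of_monotone_of_injOn hm hinj hsurj
  refine ⟨k + φ / Real.pi, C, (happrox.and (eventually_ge_atTop N)).mono fun n hn => ?_⟩
  convert hn.1 using 1
  rw [hk n hn.2]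
  push_cast
  field_simp
  ring

theorem eventually_abs_mul_integral_sub_le (D : IsRobinEigensystem a b q h β lam y y') :
    ∃ c C : ℝ, ∀ᶠ n : ℕ in atTop, ∀ x ∈ Icc a b, ∀ t ∈ Icc a b,
      |(y n x * ∫ r in a..t, y n r)
        - 2 / Real.pi * (Real.cos ((c + n) * (Real.pi / (b - a) * (x - a)))
          * (Real.sin ((c + n) * (Real.pi / (b - a) * (t - a))) / (c + n)))| ≤ C / (c + n) ^ 2 := by
  obtain ⟨c, C, happrox⟩ := D.eventually_cosineApprox
  have hL : 0 < b - a := sub_pos.2 D.lt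
  set κ := Real.pi / (b - a) with hκ
  have hκ0 : 0 < κ := by positivity
  set K := (2 + C) * C * (b - a) + 1
  set P := 8 / (b - a) ^ 2 * K
  have hlim : Tendsto (fun n : ℕ => κ * (c + n)) atTop atTop :=
    (tendsto_atTop_add_const_left _ _ tendsto_natCast_atTop_atTop).const_mul_atTop hκ0
  refine ⟨c, (P * (1 + C) ^ 2 + 2 / (b - a) * C * (2 + C)) / κ ^ 2, ?_⟩
  filter_upwards [happrox, hlim.eventually_ge_atTop 1,
    hlim.eventually_ge_atTop (K / ((b - a) / 4))] with n hu hone hbig x hx t ht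
  have hu_cont : ContinuousOn (fun x => y n x / y n a) (Icc a b) := (D.continuousOn n).div_const _
  have hy := D.ne_zero_left n
  have hcn : c + (n : ℝ) ≠ 0 := fun h0 => by rw [h0] at hone; linarith
  have hnorm : y n a ^ 2 * ∫ x in a..b, y n x / y n a * (y n x / y n a) = 1 := by
    simp_rw [← sq, div_pow]
    rw [intervalIntegral.integral_div, D.integral_sq]
    field_simp
  have hp := abs_sub_two_div_le hL hnorm
    (hu.abs_integral_mul_sub_half_le hu D.lt.le hone hu_cont hu_cont)
    ((div_le_comm₀ (by positivity) (one_pos.trans_le hone)).1 hbig)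
  have hmain := hu.abs_mul_integral_sub_le hone (by positivity)
    (hp.trans_eq (mul_div_assoc _ _ _).symm) hx ht
  simp_rw [mul_comm κ (c + n), mul_assoc (c + (n : ℝ))] at hmain
  convert hmain using 1
  · rw [intervalIntegral.integral_div, hκ]
    field_simp
  · simp only [P, K]
    field_simp

end IsRobinEigensystem

/-! ### Sums of sines -/

theorem abs_sum_mul_sub_le {w d : ℕ → ℝ} (hw : Antitone w) (hw0 : ∀ n, 0 ≤ w n)
    (hd : ∀ n, |d n| ≤ 1) (N : ℕ) :
    |∑ j ∈ Finset.range N, w j * (d j - d (j + 1))| ≤ 2 * w 0 := by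
  have hbound : ∀ {r}, 0 ≤ r → ∀ n, |r * d n| ≤ r := fun hr n => by
    rw [abs_mul, abs_of_nonneg hr]
    exact mul_le_of_le_one_right hr (hd n)
  have habel : |∑ j ∈ Finset.range N, w j * (d j - d (j + 1)) + w N * d N| ≤ 2 * w 0 - w N := by
    induction N with
    | zero => simpa [two_mul] using hbound (hw0 0) 0
    | succ k ih =>
      have hstep := hbound (sub_nonneg.2 (hw k.le_succ)) (k + 1)
      rw [Finset.sum_range_succ]
      calc |∑ j ∈ Finset.range k, w j * (d j - d (j + 1)) + w k * (d k - d (k + 1))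
            + w (k + 1) * d (k + 1)|
          = |(∑ j ∈ Finset.range k, w j * (d j - d (j + 1)) + w k * d k)
            - (w k - w (k + 1)) * d (k + 1)| := by ring_nf
        _ ≤ (2 * w 0 - w k) + (w k - w (k + 1)) := (abs_sub _ _).trans (add_le_add ih hstep)
        _ = 2 * w 0 - w (k + 1) := by ring
  have hlast := hbound (hw0 N) N
  rw [abs_le] at habel hlast ⊢
  constructor <;> linarith

/-- The sums `∑ sin ((c + j) θ) / (c + j)` that govern the partial sums of a sine series with
frequencies shifted by `c`. -/
noncomputable def sineSum (c θ : ℝ) (N : ℕ) : ℝ :=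
  ∑ j ∈ Finset.range N, Real.sin ((c + j) * θ) / (c + j)

theorem sineSum_add (c θ : ℝ) (M N : ℕ) :
    sineSum c θ (M + N) = sineSum c θ M + sineSum (c + M) θ N := by
  simp only [sineSum, Finset.sum_range_add, Nat.cast_add, add_assoc]

theorem abs_sineSum_le_div {c θ κ : ℝ} (hc : 0 < c) (hκ : 0 < κ) (hθ : κ ≤ Real.sin (θ / 2))
    (N : ℕ) : |sineSum c θ N| ≤ 1 / (κ * c) := by
  have htelescope : ∑ j ∈ Finset.range N, 1 / (c + (j : ℝ)) *
      (Real.cos ((c + j - 1 / 2) * θ) - Real.cos ((c + (j + 1 : ℕ) - 1 / 2) * θ))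
      = 2 * Real.sin (θ / 2) * sineSum c θ N := by
    rw [sineSum, Finset.mul_sum]
    refine Finset.sum_congr rfl fun j _ => ?_
    rw [show (c + (j : ℝ) - 1 / 2) * θ = (c + j) * θ - θ / 2 by ring,
      show (c + ((j + 1 : ℕ) : ℝ) - 1 / 2) * θ = (c + j) * θ + θ / 2 by push_cast; ring,
      Real.cos_sub, Real.cos_add]
    ring
  have hw : Antitone fun j : ℕ => 1 / (c + (j : ℝ)) := fun i j hij => by
    have : (i : ℝ) ≤ j := mod_cast hij
    dsimp only
    gcongr
  have habel := abs_sum_mul_sub_le hw (fun j => by positivity)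
    (fun j => Real.abs_cos_le_one ((c + j - 1 / 2) * θ)) N
  rw [htelescope, abs_mul, abs_of_pos (by linarith), Nat.cast_zero, add_zero] at habel
  calc |sineSum c θ N| = κ * |sineSum c θ N| / κ := by field_simp
    _ ≤ Real.sin (θ / 2) * |sineSum c θ N| / κ := by gcongr
    _ ≤ 1 / c / κ := by gcongr; linarith
    _ = 1 / (κ * c) := by rw [div_div, mul_comm]

theorem abs_sineSum_le_mul {c θ : ℝ} (hc : 0 < c) (N : ℕ) : |sineSum c θ N| ≤ N * |θ| := by
  calc |sineSum c θ N| ≤ ∑ j ∈ Finset.range N, |Real.sin ((c + j) * θ) / (c + j)| :=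
        Finset.abs_sum_le_sum_abs _ _
    _ ≤ ∑ _j ∈ Finset.range N, |θ| := by
        refine Finset.sum_le_sum fun j _ => ?_
        have hcj : 0 < c + (j : ℝ) := by positivity
        rw [abs_div, abs_of_pos hcj, div_le_iff₀' hcj, ← abs_of_pos hcj, ← abs_mul,
          abs_of_pos hcj]
        exact Real.abs_sin_le_abs
    _ = N * |θ| := by simp

/-- The sum is split at `1 / θ`: before, each term is at most `θ`; after, summation by parts. -/
theorem abs_sineSum_le {c θ : ℝ} (hc : 1 ≤ c) (h0 : 0 ≤ θ) (hpi : θ ≤ Real.pi) (N : ℕ) :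
    |sineSum c θ N| ≤ 1 + Real.pi := by
  have hpos := Real.pi_pos
  rcases h0.eq_or_lt with rfl | hθ
  · simp only [sineSum, mul_zero, Real.sin_zero, zero_div, Finset.sum_const_zero, abs_zero]
    positivity
  set J := ⌊1 / θ⌋₊
  have hJ : (J : ℝ) * θ ≤ 1 := (le_div_iff₀ hθ).1 (Nat.floor_le (by positivity))
  have hJ' : 1 < ((J : ℝ) + 1) * θ := (div_lt_iff₀ hθ).1 (Nat.lt_floor_add_one _)
  have hhead : ∀ M ≤ J, |sineSum c θ M| ≤ 1 := fun M hM => by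
    refine (abs_sineSum_le_mul (by linarith) M).trans (le_trans ?_ hJ)
    rw [abs_of_pos hθ]
    gcongr
  rcases le_total N J with hN | hN
  · linarith [hhead N hN]
  obtain ⟨k, rfl⟩ := Nat.exists_eq_add_of_le hN
  have hsin : θ / Real.pi ≤ Real.sin (θ / 2) := by
    refine le_trans (le_of_eq ?_) (Real.mul_le_sin (x := θ / 2) (by linarith) (by linarith))
    ring
  have htail : |sineSum (c + J) θ k| ≤ Real.pi := by
    refine (abs_sineSum_le_div (by positivity) (by positivity) hsin k).trans ?_
    rw [div_le_iff₀ (by positivity)]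
    calc 1 ≤ θ * (c + J) := by nlinarith
      _ = Real.pi * (θ / Real.pi * (c + J)) := by field_simp
  rw [sineSum_add]
  exact (abs_add_le _ _).trans (add_le_add (hhead J le_rfl) htail)

theorem sum_one_div_add_sq_le {c : ℝ} (hc : 1 ≤ c) (N : ℕ) :
    ∑ j ∈ Finset.range N, 1 / (c + j) ^ 2 ≤ 2 / c := by
  have hterm : ∀ j : ℕ, 1 / (c + j) ^ 2 ≤ 2 / (c + j) - 2 / (c + (j + 1 : ℕ)) := fun j => by
    have : 1 ≤ c + (j : ℝ) := le_add_of_le_of_nonneg hc j.cast_nonneg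
    rw [Nat.cast_succ, ← add_assoc, div_sub_div _ _ (by positivity) (by positivity),
      div_le_div_iff₀ (by positivity) (by positivity)]
    nlinarith
  calc ∑ j ∈ Finset.range N, 1 / (c + j) ^ 2
      ≤ ∑ j ∈ Finset.range N, (2 / (c + (j : ℝ)) - 2 / (c + (j + 1 : ℕ))) :=
        Finset.sum_le_sum fun j _ => hterm j
    _ = 2 / c - 2 / (c + N) := by
        rw [Finset.sum_range_sub' (fun j : ℕ => 2 / (c + (j : ℝ)))]
        simp
    _ ≤ 2 / c := sub_le_self _ (by positivity)

theorem sum_cos_mul_sin_div (c ξ τ : ℝ) (N : ℕ) :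
    ∑ j ∈ Finset.range N, Real.cos ((c + j) * ξ) * (Real.sin ((c + j) * τ) / (c + j))
      = (sineSum c (τ + ξ) N + sineSum c (τ - ξ) N) / 2 := by
  rw [sineSum, sineSum, ← Finset.sum_add_distrib, Finset.sum_div]
  refine Finset.sum_congr rfl fun j _ => ?_
  rw [mul_add, mul_sub, Real.sin_add, Real.sin_sub]
  ring

theorem exists_le_sin_half {τ : ℝ} (h0 : 0 < τ) (hpi : τ ≤ Real.pi) :
    ∃ κ > 0, ∀ σ, |σ| ≤ τ / 2 → κ ≤ Real.sin ((τ + σ) / 2) := by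
  obtain ⟨σ₀, hσ₀, hmin⟩ := (isCompact_Icc (a := -(τ / 2)) (b := τ / 2)).exists_isMinOn
    (nonempty_Icc.2 (by linarith)) (f := fun σ => Real.sin ((τ + σ) / 2)) (by fun_prop)
  exact ⟨_, Real.sin_pos_of_pos_of_lt_pi (by linarith [hσ₀.1]) (by linarith [hσ₀.2]),
    fun σ hσ => hmin (abs_le.1 hσ)⟩

theorem exists_abs_sum_range_le {α : Type*} {s : Set α} {g : ℕ → α → ℝ} {n₀ : ℕ} {B : ℝ}
    (hterm : ∀ n, ∃ A, ∀ t ∈ s, |g n t| ≤ A)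
    (htail : ∀ k, ∀ t ∈ s, |∑ j ∈ Finset.range k, g (n₀ + j) t| ≤ B) :
    ∃ A, ∀ N, ∀ t ∈ s, |∑ n ∈ Finset.range N, g n t| ≤ A := by
  choose A hA using hterm
  refine ⟨∑ n ∈ Finset.range n₀, |A n| + |B|, fun N t ht => ?_⟩
  have hhead : ∀ N ≤ n₀, |∑ n ∈ Finset.range N, g n t| ≤ ∑ n ∈ Finset.range n₀, |A n| :=
    fun N hN => (Finset.abs_sum_le_sum_abs _ _).trans <|
      (Finset.sum_le_sum fun n _ => (hA n t ht).trans (le_abs_self _)).trans <|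
      Finset.sum_le_sum_of_subset_of_nonneg (Finset.range_mono hN) fun n _ _ => abs_nonneg _
  rcases le_total N n₀ with hN | hN
  · exact le_add_of_le_of_nonneg (hhead N hN) (abs_nonneg _)
  · obtain ⟨k, rfl⟩ := Nat.exists_eq_add_of_le hN
    rw [Finset.sum_range_add]
    exact (abs_add_le _ _).trans
      (add_le_add (hhead n₀ le_rfl) ((htail k t ht).trans (le_abs_self _)))

theorem uniformCauchySeqOn_of_dist_le {α E : Type*} [PseudoMetricSpace E] {F : ℕ → α → E}
    {s : Set α} {ε : ℕ → ℝ} (hε : Tendsto ε atTop (𝓝 0))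
    (h : ∀ᶠ M in atTop, ∀ N ≥ M, ∀ x ∈ s, dist (F M x) (F N x) ≤ ε M) :
    UniformCauchySeqOn F atTop s := by
  rw [Metric.uniformCauchySeqOn_iff]
  intro δ hδ
  obtain ⟨M, hM, hεM⟩ := (h.and (hε.eventually_lt_const (half_pos hδ))).exists
  exact ⟨M, fun m hm n hn x hx => (dist_triangle_left _ _ (F M x)).trans_lt
    (by linarith [hM m hm x hx, hM n hn x hx])⟩

namespace IsRobinEigensystem

variable {a b h β : ℝ} {q : ℝ → ℝ} {lam : ℕ → ℝ} {y y' : ℕ → ℝ → ℝ}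

theorem exists_abs_sum_le_sineSum (D : IsRobinEigensystem a b q h β lam y y') :
    ∃ (c C : ℝ) (n₀ : ℕ), 1 ≤ c + n₀ ∧ ∀ M ≥ n₀, ∀ k, ∀ x ∈ Icc a b, ∀ t ∈ Icc a b,
      |∑ j ∈ Finset.range k, y (M + j) x * ∫ r in a..t, y (M + j) r| ≤
        (|sineSum (c + M) (Real.pi / (b - a) * (t - a) + Real.pi / (b - a) * (x - a)) k|
          + |sineSum (c + M) (Real.pi / (b - a) * (t - a) - Real.pi / (b - a) * (x - a)) k|)
          / Real.pi + C / (c + M) := by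
  obtain ⟨c, C, hterm⟩ := D.eventually_abs_mul_integral_sub_le
  have hlim : Tendsto (fun n : ℕ => c + n) atTop atTop :=
    tendsto_atTop_add_const_left _ _ tendsto_natCast_atTop_atTop
  obtain ⟨n₀, hn₀⟩ := eventually_atTop.1 (hterm.and (hlim.eventually_ge_atTop 1))
  refine ⟨c, 2 * |C|, n₀, (hn₀ n₀ le_rfl).2, fun M hM k x hx t ht => ?_⟩
  set ξ := Real.pi / (b - a) * (x - a)
  set τ := Real.pi / (b - a) * (t - a)
  set main := fun j : ℕ =>
    Real.cos ((c + M + j) * ξ) * (Real.sin ((c + M + j) * τ) / (c + M + j))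
  have herror : ∀ j, |(y (M + j) x * ∫ r in a..t, y (M + j) r) - 2 / Real.pi * main j|
      ≤ |C| * (1 / (c + M + j) ^ 2) := fun j => by
    have hj := (hn₀ (M + j) (hM.trans (M.le_add_right j))).1 x hx t ht
    rw [Nat.cast_add, ← add_assoc] at hj
    rw [mul_one_div]
    exact hj.trans (by gcongr; exact le_abs_self C)
  have hmain : |2 / Real.pi * ∑ j ∈ Finset.range k, main j|
      ≤ (|sineSum (c + M) (τ + ξ) k| + |sineSum (c + M) (τ - ξ) k|) / Real.pi := by
    rw [sum_cos_mul_sin_div, show ∀ s, 2 / Real.pi * (s / 2) = s / Real.pi by intro s; ring,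
      abs_div, abs_of_pos Real.pi_pos]
    gcongr
    exact abs_add_le _ _
  calc |∑ j ∈ Finset.range k, y (M + j) x * ∫ r in a..t, y (M + j) r|
      = |2 / Real.pi * ∑ j ∈ Finset.range k, main j + ∑ j ∈ Finset.range k,
          ((y (M + j) x * ∫ r in a..t, y (M + j) r) - 2 / Real.pi * main j)| := by
        rw [Finset.sum_sub_distrib, Finset.mul_sum, add_sub_cancel]
    _ ≤ (|sineSum (c + M) (τ + ξ) k| + |sineSum (c + M) (τ - ξ) k|) / Real.pi
          + ∑ j ∈ Finset.range k, |C| * (1 / (c + M + j) ^ 2) :=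
        (abs_add_le _ _).trans (add_le_add hmain ((Finset.abs_sum_le_sum_abs _ _).trans
          (Finset.sum_le_sum fun j _ => herror j)))
    _ ≤ _ := by
        rw [← Finset.mul_sum, mul_comm 2, mul_div_assoc]
        gcongr
        exact sum_one_div_add_sq_le (hn₀ M hM).2 k

theorem exists_abs_sum_le (D : IsRobinEigensystem a b q h β lam y y') :
    ∃ B : ℝ, ∀ N, ∀ t ∈ Icc a b,
      |∑ n ∈ Finset.range N, y n a * ∫ r in a..t, y n r| ≤ B := by
  obtain ⟨c, C, n₀, hc, hblock⟩ := D.exists_abs_sum_le_sineSum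
  have ha : a ∈ Icc a b := left_mem_Icc.2 D.lt.le
  refine exists_abs_sum_range_le (n₀ := n₀) (fun n => isCompact_Icc.exists_bound_of_continuousOn
      (continuousOn_const.mul (continuousOn_integral_Icc (D.continuousOn n) ha)))
    (B := ((1 + Real.pi) + (1 + Real.pi)) / Real.pi + C / (c + n₀)) fun k t ht => ?_
  have hL : 0 < b - a := sub_pos.2 D.lt
  have hθ : Real.pi / (b - a) * (t - a) ≤ Real.pi := by
    rw [div_mul_eq_mul_div, div_le_iff₀ hL]
    gcongr
    exact ht.2
  have hsum := abs_sineSum_le hc (mul_nonneg (by positivity) (sub_nonneg.2 ht.1)) hθ k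
  refine (hblock n₀ le_rfl k a ha t ht).trans ?_
  rw [sub_self, mul_zero, add_zero, sub_zero]
  gcongr

theorem uniformCauchySeqOn_sum (D : IsRobinEigensystem a b q h β lam y y') {t : ℝ}
    (ht : t ∈ Ioc a b) :
    UniformCauchySeqOn (fun N x => ∑ n ∈ Finset.range N, y n x * ∫ r in a..t, y n r) atTop
      (Icc a ((a + t) / 2)) := by
  obtain ⟨c, C, n₀, hc, hblock⟩ := D.exists_abs_sum_le_sineSum
  have hL : 0 < b - a := sub_pos.2 D.lt
  have hta : 0 < t - a := sub_pos.2 ht.1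
  set τ := Real.pi / (b - a) * (t - a) with hτ
  have hτpi : τ ≤ Real.pi := by
    rw [hτ, div_mul_eq_mul_div, div_le_iff₀ hL]
    gcongr
    exact ht.2
  obtain ⟨κ, hκ, hsin⟩ := exists_le_sin_half (by positivity) hτpi
  have hlim : Tendsto (fun n : ℕ => ((1 / κ + 1 / κ) / Real.pi + C) / (c + n)) atTop (𝓝 0) :=
    (tendsto_atTop_add_const_left _ _ tendsto_natCast_atTop_atTop).const_div_atTop _
  refine uniformCauchySeqOn_of_dist_le hlim ?_
  filter_upwards [eventually_ge_atTop n₀] with M hM N hN x hx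
  obtain ⟨k, rfl⟩ := Nat.exists_eq_add_of_le hN
  have hcM : 0 < c + (M : ℝ) := by linarith [show (n₀ : ℝ) ≤ M from mod_cast hM]
  have hξ : |Real.pi / (b - a) * (x - a)| ≤ τ / 2 := by
    rw [abs_of_nonneg (mul_nonneg (by positivity) (sub_nonneg.2 hx.1)), hτ, mul_div_assoc]
    gcongr
    linarith [hx.2]
  have hsum : ∀ σ, |σ| ≤ τ / 2 → |sineSum (c + M) (τ + σ) k| ≤ 1 / (κ * (c + M)) := fun σ hσ =>
    abs_sineSum_le_div hcM hκ (hsin σ hσ) k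
  rw [dist_comm, Real.dist_eq, Finset.sum_range_add, add_sub_cancel_left]
  refine (hblock M hM k x ⟨hx.1, by linarith [hx.2, ht.2]⟩ t (Ioc_subset_Icc_self ht)).trans ?_
  calc _ ≤ (1 / (κ * (c + M)) + 1 / (κ * (c + M))) / Real.pi + C / (c + M) := by
        rw [sub_eq_add_neg _ (Real.pi / (b - a) * (x - a))]
        gcongr
        · exact hsum _ hξ
        · exact hsum _ ((abs_neg _).trans_le hξ)
    _ = ((1 / κ + 1 / κ) / Real.pi + C) / (c + M) := by field_simp

end IsRobinEigensystem

/-! ### Convergence at the endpoint -/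

theorem tendsto_of_uniformCauchySeqOn_of_tendsto_integral {a b : ℝ} (hab : a < b)
    {F : ℕ → ℝ → ℝ} {g : ℝ → ℝ} (hF : ∀ N, ContinuousOn (F N) (Icc a b))
    (hg : ContinuousOn g (Icc a b)) (hcauchy : UniformCauchySeqOn F atTop (Icc a b))
    (hint : ∀ x ∈ Icc a b, Tendsto (fun N => ∫ t in a..x, F N t) atTop (𝓝 (∫ t in a..x, g t)))
    {x : ℝ} (hx : x ∈ Icc a b) : Tendsto (fun N => F N x) atTop (𝓝 (g x)) := by
  have ha : a ∈ Icc a b := left_mem_Icc.2 hab.le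
  choose! G hG using fun x hx => cauchySeq_tendsto_of_complete (hcauchy.cauchySeq (x := x) hx)
  have hunif : TendstoUniformlyOn F G atTop (Icc a b) :=
    hcauchy.tendstoUniformlyOn_of_tendsto hG
  have hGcont : ContinuousOn G (Icc a b) := hunif.continuousOn (Eventually.of_forall hF).frequently
  have hprim : EqOn (fun x => ∫ t in a..x, G t) (fun x => ∫ t in a..x, g t) (Icc a b) :=
    fun x hx => tendsto_nhds_unique
      (TendstoUniformlyOn.tendsto_intervalIntegral_of_continuousOn
        (Eventually.of_forall fun N => (hF N).mono (uIcc_subset_Icc ha hx))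
        (hunif.mono (uIcc_subset_Icc ha hx)))
      (hint x hx)
  have hderiv := (hasDerivWithinAt_integral_Icc hGcont ha hx).congr
    (fun x hx => (hprim hx).symm) (hprim hx).symm
  rw [(uniqueDiffOn_Icc hab x hx).eq_deriv _ (hasDerivWithinAt_integral_Icc hg ha hx) hderiv]
  exact hG x hx

namespace IsRobinEigensystem

variable {a b h β : ℝ} {q : ℝ → ℝ} {lam : ℕ → ℝ} {y y' : ℕ → ℝ → ℝ}

/-- Differentiate the Parseval identity for the indicators of `[a, x]` and `[a, t]` at `x = a`. -/
theorem tendsto_sum_mul_integral (D : IsRobinEigensystem a b q h β lam y y') {t : ℝ}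
    (ht : t ∈ Ioc a b) :
    Tendsto (fun N => ∑ n ∈ Finset.range N, y n a * ∫ r in a..t, y n r) atTop (𝓝 1) := by
  have hsub : Icc a ((a + t) / 2) ⊆ Icc a b := Icc_subset_Icc_right (by linarith [ht.1, ht.2])
  have hcont : ∀ n, ContinuousOn (fun x => y n x * ∫ r in a..t, y n r) (Icc a ((a + t) / 2)) :=
    fun n => ((D.continuousOn n).mono hsub).mul continuousOn_const
  have hmid : a < (a + t) / 2 := by linarith [ht.1]
  have ha : a ∈ Icc a ((a + t) / 2) := left_mem_Icc.2 hmid.le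
  refine tendsto_of_uniformCauchySeqOn_of_tendsto_integral (g := fun _ => 1) hmid
    (fun N => continuousOn_finsetSum _ fun n _ => hcont n) continuousOn_const
    (D.uniformCauchySeqOn_sum ht) (fun x hx => ?_) ha
  have hparseval := D.hasSum_integral_mul_integral hx.1 (by linarith [hx.2, ht.1]) ht.2
  rw [intervalIntegral.integral_const, smul_eq_mul, mul_one]
  refine hparseval.tendsto_sum_nat.congr fun N => ?_
  rw [intervalIntegral.integral_finsetSum fun n _ =>
    intervalIntegrable_of_continuousOn_Icc (hcont n) ha hx]
  simp only [intervalIntegral.integral_mul_const]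

end IsRobinEigensystem

section BoundedVariation

variable {a b B : ℝ} {K : ℕ → ℝ → ℝ}

theorem measureReal_Ioc_stieltjes (G : StieltjesFunction ℝ) {s t : ℝ} (hst : s ≤ t) :
    G.measure.real (Ioc s t) = G t - G s := by
  rw [measureReal_def, G.measure_Ioc, ENNReal.toReal_ofReal (sub_nonneg.2 (G.mono hst))]

instance isFiniteMeasure_stieltjes_restrict_Ioc (G : StieltjesFunction ℝ) :
    IsFiniteMeasure (G.measure.restrict (Ioc a b)) :=
  ⟨by simp [G.measure_Ioc]⟩

theorem integral_stieltjes_mul_eq_sub (hab : a ≤ b) (G : StieltjesFunction ℝ) {k : ℝ → ℝ}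
    (hk : IntegrableOn k (Ioc a b)) :
    ∫ t in a..b, G t * k t
      = G b * (∫ t in a..b, k t) - ∫ s in Ioc a b, (∫ t in a..s, k t) ∂G.measure := by
  have hint : Integrable (Function.uncurry fun t => (Ioi t).indicator fun _ => k t)
      ((volume.restrict (Ioc a b)).prod (G.measure.restrict (Ioc a b))) :=
    (hk.comp_fst _).indicator (measurableSet_lt measurable_fst measurable_snd)
  have hinner : ∀ t ∈ Ioc a b, ∫ s in Ioc a b, (Ioi t).indicator (fun _ => k t) s ∂G.measure
      = (G b - G t) * k t := fun t ht => by
    rw [setIntegral_indicator measurableSet_Ioi, Ioc_inter_Ioi, sup_eq_right.2 ht.1.le,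
      setIntegral_const, measureReal_Ioc_stieltjes G ht.2, smul_eq_mul]
  have houter : ∀ s ∈ Ioc a b, ∫ t in Ioc a b, (Ioi t).indicator (fun _ => k t) s
      = ∫ t in a..s, k t := fun s hs => by
    change ∫ t in Ioc a b, (Iio s).indicator k t = _
    rw [setIntegral_indicator measurableSet_Iio, intervalIntegral.integral_of_le hs.1.le,
      integral_Ioc_eq_integral_Ioo]
    congr 2
    ext t
    simp only [mem_inter_iff, mem_Ioc, mem_Iio, mem_Ioo]
    exact ⟨fun h => ⟨h.1.1, h.2⟩, fun h => ⟨⟨h.1, h.2.le.trans hs.2⟩, h.2⟩⟩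
  have hswap := integral_integral_swap hint
  rw [setIntegral_congr_fun measurableSet_Ioc hinner,
    setIntegral_congr_fun measurableSet_Ioc houter] at hswap
  have hright : IntegrableOn (fun t => (G b - G t) * k t) (Ioc a b) :=
    IntegrableOn.congr_fun hint.integral_prod_left hinner measurableSet_Ioc
  rw [← hswap, intervalIntegral.integral_of_le hab, intervalIntegral.integral_of_le hab,
    ← integral_const_mul, ← integral_sub (hk.const_mul _) hright]
  congr 1 with t
  ring

theorem tendsto_integral_stieltjes_mul (hab : a < b) (hK : ∀ N, ContinuousOn (K N) (Icc a b))
    (hB : ∀ N, ∀ t ∈ Icc a b, |∫ s in a..t, K N s| ≤ B)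
    (hlim : ∀ t ∈ Ioc a b, Tendsto (fun N => ∫ s in a..t, K N s) atTop (𝓝 1))
    (G : StieltjesFunction ℝ) :
    Tendsto (fun N => ∫ t in a..b, G t * K N t) atTop (𝓝 (G a)) := by
  have hdom : Tendsto (fun N => ∫ s in Ioc a b, (∫ t in a..s, K N t) ∂G.measure) atTop
      (𝓝 (∫ _s in Ioc a b, (1 : ℝ) ∂G.measure)) := by
    refine tendsto_integral_of_dominated_convergence (fun _ => B) (fun N => ?_)
      (integrable_const _) (fun N => ?_) ?_
    · exact ((continuousOn_integral_Icc (hK N) (left_mem_Icc.2 hab.le)).mono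
        Ioc_subset_Icc_self).aestronglyMeasurable measurableSet_Ioc
    · exact ae_restrict_of_forall_mem measurableSet_Ioc fun s hs =>
        hB N s (Ioc_subset_Icc_self hs)
    · exact ae_restrict_of_forall_mem measurableSet_Ioc hlim
  have htotal := ((hlim b (right_mem_Ioc.2 hab)).const_mul (G b)).sub hdom
  rw [setIntegral_const, measureReal_Ioc_stieltjes G hab.le, smul_eq_mul, mul_one, mul_one,
    sub_sub_cancel] at htotal
  exact htotal.congr fun N => (integral_stieltjes_mul_eq_sub hab.le G
    ((hK N).integrableOn_Icc.mono_set Ioc_subset_Icc_self)).symm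

theorem tendsto_integral_monotone_mul (hab : a < b) (hK : ∀ N, ContinuousOn (K N) (Icc a b))
    (hB : ∀ N, ∀ t ∈ Icc a b, |∫ s in a..t, K N s| ≤ B)
    (hlim : ∀ t ∈ Ioc a b, Tendsto (fun N => ∫ s in a..t, K N s) atTop (𝓝 1))
    {g : ℝ → ℝ} (hg : Monotone g) :
    Tendsto (fun N => ∫ t in a..b, g t * K N t) atTop (𝓝 (Function.rightLim g a)) := by
  rw [← hg.stieltjesFunction_eq]
  refine (tendsto_integral_stieltjes_mul hab hK hB hlim _).congr fun N =>
    intervalIntegral.integral_congr_ae ?_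
  filter_upwards [hg.countable_not_continuousAt.ae_notMem volume] with t ht _
  rw [hg.stieltjesFunction_eq,
    hg.continuousWithinAt_Ioi_iff_rightLim_eq.1 (not_not.1 ht).continuousWithinAt]

theorem exists_monotone_eqOn_sub {f : ℝ → ℝ} (hab : a ≤ b) (hf : BoundedVariationOn f (Icc a b)) :
    ∃ p r : ℝ → ℝ, Monotone p ∧ Monotone r ∧ EqOn f (p - r) (Icc a b) := by
  have hextend : ∀ {p : ℝ → ℝ}, MonotoneOn p (Icc a b) → ∃ g, Monotone g ∧ EqOn p g (Icc a b) :=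
    fun hp => hp.exists_monotone_extension
      (hp.map_bddBelow subset_rfl ⟨a, fun x hx => hx.1, left_mem_Icc.2 hab⟩)
      (hp.map_bddAbove subset_rfl ⟨b, fun x hx => hx.2, right_mem_Icc.2 hab⟩)
  obtain ⟨p₀, r₀, hp₀, hr₀, rfl⟩ :=
    hf.locallyBoundedVariationOn.exists_monotoneOn_sub_monotoneOn
  obtain ⟨p, hp, hpe⟩ := hextend hp₀
  obtain ⟨r, hr, hre⟩ := hextend hr₀
  exact ⟨p, r, hp, hr, fun x hx => congr_arg₂ (· - ·) (hpe hx) (hre hx)⟩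

theorem intervalIntegrable_of_boundedVariationOn {f : ℝ → ℝ} (hab : a ≤ b)
    (hf : BoundedVariationOn f (Icc a b)) : IntervalIntegrable f volume a b := by
  obtain ⟨p, r, hp, hr, hfpr⟩ := exists_monotone_eqOn_sub hab hf
  exact (hp.intervalIntegrable.sub hr.intervalIntegrable).congr fun x hx =>
    (hfpr (Ioc_subset_Icc_self (uIoc_of_le hab ▸ hx))).symm

theorem tendsto_integral_boundedVariationOn_mul (hab : a < b)
    (hK : ∀ N, ContinuousOn (K N) (Icc a b))
    (hB : ∀ N, ∀ t ∈ Icc a b, |∫ s in a..t, K N s| ≤ B)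
    (hlim : ∀ t ∈ Ioc a b, Tendsto (fun N => ∫ s in a..t, K N s) atTop (𝓝 1))
    {f : ℝ → ℝ} {ℓ : ℝ} (hf : BoundedVariationOn f (Icc a b)) (hℓ : Tendsto f (𝓝[>] a) (𝓝 ℓ)) :
    Tendsto (fun N => ∫ t in a..b, f t * K N t) atTop (𝓝 ℓ) := by
  obtain ⟨p, r, hp, hr, hfpr⟩ := exists_monotone_eqOn_sub hab.le hf
  have hℓ' : Function.rightLim p a - Function.rightLim r a = ℓ := by
    refine tendsto_nhds_unique ((hp.tendsto_rightLim a).sub (hr.tendsto_rightLim a))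
      (hℓ.congr' ?_)
    filter_upwards [Ioc_mem_nhdsGT hab] with x hx using hfpr (Ioc_subset_Icc_self hx)
  rw [← hℓ']
  refine ((tendsto_integral_monotone_mul hab hK hB hlim hp).sub
    (tendsto_integral_monotone_mul hab hK hB hlim hr)).congr fun N => ?_
  have hKu : ContinuousOn (K N) (uIcc a b) := (uIcc_of_le hab.le).symm ▸ hK N
  rw [← intervalIntegral.integral_sub (hp.intervalIntegrable.mul_continuousOn hKu)
    (hr.intervalIntegrable.mul_continuousOn hKu)]
  refine intervalIntegral.integral_congr fun x hx => ?_
  rw [uIcc_of_le hab.le] at hx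
  simp only [hfpr hx, Pi.sub_apply, sub_mul]

end BoundedVariation

theorem IsRobinEigensystem.tendsto_sum_coeff_mul {a b h β : ℝ} {q : ℝ → ℝ} {lam : ℕ → ℝ}
    {y y' : ℕ → ℝ → ℝ} (D : IsRobinEigensystem a b q h β lam y y') {f : ℝ → ℝ} {ℓ : ℝ}
    (hf : BoundedVariationOn f (Icc a b)) (hℓ : Tendsto f (𝓝[>] a) (𝓝 ℓ)) :
    Tendsto (fun N => ∑ n ∈ Finset.range N, (∫ x in a..b, y n x * f x) * y n a) atTop (𝓝 ℓ) := by
  have ha : a ∈ Icc a b := left_mem_Icc.2 D.lt.le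
  have hterm : ∀ n, ContinuousOn (fun t => y n a * y n t) (Icc a b) := fun n =>
    continuousOn_const.mul (D.continuousOn n)
  have hkernel : ∀ N, ∀ t ∈ Icc a b, ∫ s in a..t, ∑ n ∈ Finset.range N, y n a * y n s
      = ∑ n ∈ Finset.range N, y n a * ∫ s in a..t, y n s := fun N t ht => by
    rw [intervalIntegral.integral_finsetSum fun n _ =>
      intervalIntegrable_of_continuousOn_Icc (hterm n) ha ht]
    simp only [intervalIntegral.integral_const_mul]
  obtain ⟨B, hB⟩ := D.exists_abs_sum_le
  refine (tendsto_integral_boundedVariationOn_mul (B := B) D.lt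
    (fun N => continuousOn_finsetSum (Finset.range N) fun n _ => hterm n)
    (fun N t ht => (hkernel N t ht).symm ▸ hB N t ht)
    (fun t ht => (D.tendsto_sum_mul_integral ht).congr fun N =>
      (hkernel N t (Ioc_subset_Icc_self ht)).symm) hf hℓ).congr fun N => ?_
  simp only [Finset.mul_sum]
  rw [intervalIntegral.integral_finsetSum fun n _ =>
    (intervalIntegrable_of_boundedVariationOn D.lt.le hf).mul_continuousOn
      ((uIcc_of_le D.lt.le).symm ▸ hterm n)]
  refine Finset.sum_congr rfl fun n _ => ?_
  rw [← intervalIntegral.integral_mul_const]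
  congr 1 with x
  ring

/-! ### The separated Sturm–Liouville problem -/

theorem isSLEigenpair_iff {a b α β μ : ℝ} {q z : ℝ → ℝ} (hq : ContinuousOn q (Icc a b)) :
    IsSLEigenpair a b q α β μ z ↔ ∃ z', IsSolution a b (fun x => q x - μ) z z' ∧
      (∃ x ∈ Icc a b, z x ≠ 0) ∧ z a * Real.cos α + z' a * Real.sin α = 0 ∧
      z b * Real.cos β + z' b * Real.sin β = 0 := by
  constructor
  · rintro ⟨z', z'', hz, hz', -, hne, heq, hα, hβ⟩
    exact ⟨z', ⟨hz, fun x hx => (hz' x hx).congr_deriv (by linarith [heq x hx])⟩, hne, hα, hβ⟩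
  · rintro ⟨z', hz, hne, hα, hβ⟩
    exact ⟨z', fun x => (q x - μ) * z x, hz.hasDerivWithinAt, hz.hasDerivWithinAt_deriv,
      (hq.sub continuousOn_const).mul hz.continuousOn, hne, fun x _ => by ring, hα, hβ⟩

theorem eq_neg_cos_div_sin_mul_iff {α u v : ℝ} (hα : Real.sin α ≠ 0) :
    v = -Real.cos α / Real.sin α * u ↔ u * Real.cos α + v * Real.sin α = 0 := by
  rw [div_mul_eq_mul_div, eq_div_iff hα, ← sub_eq_zero]
  ring_nf

theorem exists_isRobinEigensystem {a b α β : ℝ} {q : ℝ → ℝ} {lam : ℕ → ℝ} {y : ℕ → ℝ → ℝ}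
    (hab : a < b) (hq : ContinuousOn q (Icc a b)) (hα : Real.sin α ≠ 0)
    (heig : ∀ n, IsSLEigenpair a b q α β (lam n) (y n)) (hmono : StrictMono lam)
    (hcomplete : ∀ μ z, IsSLEigenpair a b q α β μ z → ∃ n, lam n = μ)
    (hnorm : ∀ n, ∫ x in a..b, y n x ^ 2 = 1) :
    ∃ y', IsRobinEigensystem a b q (-Real.cos α / Real.sin α) β lam y y' := by
  simp only [isSLEigenpair_iff hq] at heig hcomplete
  choose y' hsol _ hleft hright using heig
  exact ⟨y',
    { lt := hab
      continuousOn_potential := hq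
      isSolution := hsol
      left := fun n => (eq_neg_cos_div_sin_mul_iff hα).2 (hleft n)
      right := hright
      integral_sq := hnorm
      strictMono := hmono
      complete := fun μ z z' hz hza hzb hne =>
        hcomplete μ z ⟨z', hz, hne, (eq_neg_cos_div_sin_mul_iff hα).1 hza, hzb⟩ }⟩

theorem eq_zero_left_of_isSLEigenpair {a b α β μ : ℝ} {q z : ℝ → ℝ} (hα : Real.sin α = 0)
    (hz : IsSLEigenpair a b q α β μ z) : z a = 0 := by
  obtain ⟨z', -, -, -, -, -, -, hza, -⟩ := hz
  rw [hα, mul_zero, add_zero] at hza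
  refine (mul_eq_zero.1 hza).resolve_right fun hcos => ?_
  simpa [hα, hcos] using Real.sin_sq_add_cos_sq α

end SturmLiouville

theorem sl_expansion_left_endpoint_general
    (a b : ℝ) (hab : a < b)
    (q : ℝ → ℝ) (hq : ContinuousOn q (Set.Icc a b))
    (α β : ℝ) (lam : ℕ → ℝ) (y : ℕ → ℝ → ℝ)
    (heig : ∀ n, IsSLEigenpair a b q α β (lam n) (y n))
    (hmono : StrictMono lam)
    (hcomplete : ∀ μ z, IsSLEigenpair a b q α β μ z → ∃ n, lam n = μ)
    (hnorm : ∀ n, ∫ x in a..b, (y n x) ^ 2 = 1)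
    (f : ℝ → ℝ) (hbv : BoundedVariationOn f (Set.Icc a b))
    (ℓ : ℝ) (hℓ : Filter.Tendsto f (nhdsWithin a (Set.Ioi a)) (nhds ℓ))
    (c : ℕ → ℝ) (hc : ∀ n, c n = ∫ x in a..b, y n x * f x) :
    Filter.Tendsto (fun N : ℕ => ∑ n ∈ Finset.range N, c n * y n a)
      Filter.atTop (nhds (if Real.sin α ≠ 0 then ℓ else 0)) := by
  simp only [hc]
  split_ifs with hα
  · obtain ⟨y', D⟩ :=
      SturmLiouville.exists_isRobinEigensystem hab hq hα heig hmono hcomplete hnorm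
    exact D.tendsto_sum_coeff_mul hbv hℓ
  · have hzero : ∀ n, y n a = 0 := fun n =>
      SturmLiouville.eq_zero_left_of_isSLEigenpair (not_not.1 hα) (heig n)
    simp [hzero]

/-- At the left endpoint `x = a` the series `∑ cₙ yₙ(a)` converges; its sum equals
`f(a)` if `sin α ≠ 0` and equals `0` in the Dirichlet case `sin α = 0`. -/
theorem sl_expansion_left_endpoint
    (a b : ℝ) (hab : a < b)
    (q : ℝ → ℝ) (hq : ContinuousOn q (Set.Icc a b))
    (α β : ℝ) (hα : α ∈ Set.Ico 0 (2 * Real.pi)) (hβ : β ∈ Set.Ico 0 (2 * Real.pi))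
    (lam : ℕ → ℝ) (y : ℕ → ℝ → ℝ)
    (heig : ∀ n, IsSLEigenpair a b q α β (lam n) (y n))
    (hmono : StrictMono lam)
    (hcomplete : ∀ μ z, IsSLEigenpair a b q α β μ z → ∃ n, lam n = μ)
    (hnorm : ∀ n, ∫ x in a..b, (y n x) ^ 2 = 1)
    (f : ℝ → ℝ) (hf : ContinuousOn f (Set.Icc a b))
    (hbv : BoundedVariationOn f (Set.Icc a b))
    (c : ℕ → ℝ) (hc : ∀ n, c n = ∫ x in a..b, y n x * f x) :
    Filter.Tendsto (fun N : ℕ => ∑ n ∈ Finset.range N, c n * y n a)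
      Filter.atTop (nhds (if Real.sin α ≠ 0 then f a else 0)) := by
  exact sl_expansion_left_endpoint_general a b hab q hq α β lam y heig hmono hcomplete hnorm f hbv
    (f a) ((continuousWithinAt_Icc_iff_Ici hab).1 (hf a (Set.left_mem_Icc.2 hab.le))
      |>.mono Set.Ioi_subset_Ici_self) c hc
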